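/- Critical Bernoulli percolation on ℤ²: the critical point satisfies p_c(ℤ²) = 1/2, and there exists α > 0 such that (1/2)·n^{−1} ≤ ℙ_{1/2}[0 ↔ ∂Λ_n] ≤ n^{−α} for all integers n ≥ 1; in particular θ(1/2) = 0. -/

import Mathlib

open MeasureTheory

namespace Perc

/-- Vertices of `ℤ^d`. -/
abbrev Vertex (d : ℕ) := Fin d → ℤ

/-- Nearest-neighbour adjacency in `ℤ^d`: `‖x − y‖₁ = 1`. -/
def adj {d : ℕ} (x y : Vertex d) : Prop :=
  (∑ i, (x i - y i).natAbs) = 1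

/-- The unordered pair `e` is a nearest-neighbour edge of `ℤ^d`. -/
def IsEdge {d : ℕ} (e : Sym2 (Vertex d)) : Prop :=
  ∃ x y : Vertex d, adj x y ∧ e = s(x, y)

/-- The set `E` of nearest-neighbour edges of `ℤ^d`. -/
abbrev Edge (d : ℕ) := {e : Sym2 (Vertex d) // IsEdge e}

/-- Percolation configurations `ω ∈ {0,1}^E`. -/
abbrev Config (d : ℕ) := Edge d → Bool

/-- One step along an open edge of `ω`. -/
def step {d : ℕ} (ω : Config d) (x y : Vertex d) : Prop :=
  ∃ h : adj x y, ω ⟨s(x, y), x, y, h, rfl⟩ = true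

/-- `x` and `y` are joined by a path of open edges. -/
def Conn {d : ℕ} (ω : Config d) : Vertex d → Vertex d → Prop :=
  Relation.ReflTransGen (step ω)

/-- The open cluster of `x` in `ω`. -/
def cluster {d : ℕ} (ω : Config d) (x : Vertex d) : Set (Vertex d) :=
  {y | Conn ω x y}

/-- The box `Λ_n = {−n, …, n}^d`. -/
def box (d n : ℕ) : Set (Vertex d) := {x | ∀ i, |x i| ≤ (n : ℤ)}

/-- `∂Λ_n`: vertices of `Λ_n` having a nearest neighbour outside `Λ_n`. -/
def boxBoundary (d n : ℕ) : Set (Vertex d) :=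
  {x | x ∈ box d n ∧ ∃ y, adj x y ∧ y ∉ box d n}

/-- The origin of `ℤ^d`. -/
def origin (d : ℕ) : Vertex d := fun _ => 0

/-- The event `{0 ↔ ∂Λ_n}`. -/
def ZeroToBoundary (d n : ℕ) : Set (Config d) :=
  {ω | ∃ y ∈ boxBoundary d n, Conn ω (origin d) y}

/-- The event `{0 ↔ ∞}` that the open cluster of the origin is infinite. -/
def ZeroToInfinity (d : ℕ) : Set (Config d) :=
  {ω | (cluster ω (origin d)).Infinite}

/-- `μ` is the law of i.i.d. Bernoulli(p) edge variables: it is a probability measure on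
`{0,1}^E` under which every finite cylinder has the corresponding product probability. -/
def IsBernoulli (d : ℕ) (p : ℝ) (μ : Measure (Config d)) : Prop :=
  IsProbabilityMeasure μ ∧
    ∀ (s : Finset (Edge d)) (f : Edge d → Bool),
      μ {ω : Config d | ∀ e ∈ s, ω e = f e} =
        ENNReal.ofReal (∏ e ∈ s, if f e then p else 1 - p)


section infra
variable {ι : Type*}

def Bern (p : ℝ) (m : Measure (ι → Bool)) : Prop :=
  IsProbabilityMeasure m ∧ ∀ (s : Finset ι) (f : ι → Bool),
    m {ω | ∀ e ∈ s, ω e = f e} = ENNReal.ofReal (∏ e ∈ s, if f e then p else 1 - p)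

def Dep (F : Finset ι) (A : Set (ι → Bool)) : Prop :=
  ∀ ω ω' : ι → Bool, (∀ e ∈ F, ω e = ω' e) → ω ∈ A → ω' ∈ A

def Incr (A : Set (ι → Bool)) : Prop :=
  ∀ ω ω' : ι → Bool, (∀ e, ω e = true → ω' e = true) → ω ∈ A → ω' ∈ A

open Classical in
noncomputable def xt (F : Finset ι) (η : F → Bool) : ι → Bool :=
  fun e => if h : e ∈ F then η ⟨e, h⟩ else false

def wt (p : ℝ) {F : Finset ι} (η : F → Bool) : ℝ := ∏ e : F, if η e then p else 1 - p

open Classical in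
noncomputable def QQ (F : Finset ι) (A : Set (ι → Bool)) (p : ℝ) : ℝ :=
  ∑ η : F → Bool, if xt F η ∈ A then wt p η else 0

def cyl (F : Finset ι) (η : F → Bool) : Set (ι → Bool) := {ω | ∀ e : F, ω e = η e}

lemma xt_apply {F : Finset ι} (η : F → Bool) (e : F) : xt F η e = η e := by
  simp [xt]

lemma Dep.mono {F G : Finset ι} {A : Set (ι → Bool)} (h : Dep F A) (hFG : F ⊆ G) : Dep G A :=
  fun ω ω' H => h ω ω' fun e he => H e (hFG he)

lemma Dep.compl {F : Finset ι} {A : Set (ι → Bool)} (h : Dep F A) : Dep F Aᶜ :=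
  fun ω ω' H hA hA' => hA (h ω' ω (fun e he => (H e he).symm) hA')

lemma Dep.inter {F : Finset ι} {A B : Set (ι → Bool)} (h : Dep F A) (h' : Dep F B) :
    Dep F (A ∩ B) := fun ω ω' H hA => ⟨h ω ω' H hA.1, h' ω ω' H hA.2⟩

lemma measurableSet_cyl (F : Finset ι) (η : F → Bool) : MeasurableSet (cyl F η) := by
  have : cyl F η = ⋂ e : F, (fun ω : ι → Bool => ω e) ⁻¹' {η e} := by
    ext; simp [cyl]
  rw [this]
  exact MeasurableSet.iInter fun e => (measurable_pi_apply _) (measurableSet_singleton _)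

lemma Dep.eq_union {F : Finset ι} {A : Set (ι → Bool)} (h : Dep F A) :
    A = ⋃ η ∈ (Set.toFinite {η : F → Bool | xt F η ∈ A}).toFinset, cyl F η := by
  ext ω
  simp only [Set.Finite.mem_toFinset, Set.mem_ofPred_eq, Set.mem_iUnion, exists_prop]
  constructor
  · intro hω
    exact ⟨fun e => ω e, h ω _ (fun e he => by simp [xt, he]) hω, fun e => rfl⟩
  · rintro ⟨η, h1, h2⟩
    exact h _ _ (fun e he => by rw [h2 ⟨e, he⟩]; exact xt_apply η ⟨e, he⟩) h1

lemma Dep.meas {F : Finset ι} {A : Set (ι → Bool)} (h : Dep F A) : MeasurableSet A := by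
  rw [h.eq_union]
  exact Finset.measurableSet_biUnion _ fun η _ => measurableSet_cyl F η

lemma wt_nonneg {p : ℝ} (h0 : 0 ≤ p) (h1 : p ≤ 1) {F : Finset ι} (η : F → Bool) : 0 ≤ wt p η :=
  Finset.prod_nonneg fun e _ => by split_ifs <;> linarith

lemma Bern.cyl {p : ℝ} {m : Measure (ι → Bool)} (hm : Bern p m) (h0 : 0 ≤ p) (h1 : p ≤ 1)
    (F : Finset ι) (η : F → Bool) : m.real (cyl F η) = wt p η := by
  have h := hm.2 F (xt F η)
  have e1 : {ω : ι → Bool | ∀ e ∈ F, ω e = xt F η e} = Perc.cyl F η := by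
    ext ω
    simp only [Set.mem_ofPred_eq, Perc.cyl, Subtype.forall]
    exact forall₂_congr fun e he => by rw [← xt_apply η ⟨e, he⟩]
  have e2 : (∏ e ∈ F, if xt F η e then p else 1 - p) = wt p η := by
    rw [wt, ← Finset.prod_coe_sort]
    exact Finset.prod_congr rfl fun e _ => by rw [xt_apply]
  rw [e1, e2] at h
  rw [Measure.real, h, ENNReal.toReal_ofReal (wt_nonneg h0 h1 η)]

lemma cyl_disj {F : Finset ι} {η ζ : F → Bool} (h : η ≠ ζ) : Disjoint (cyl F η) (cyl F ζ) := by
  rw [Set.disjoint_left]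
  intro ω h1 h2
  exact h (funext fun e => by rw [← h1 e, h2 e])

lemma Bern.form {p : ℝ} {m : Measure (ι → Bool)} (hm : Bern p m) (h0 : 0 ≤ p) (h1 : p ≤ 1)
    {F : Finset ι} {A : Set (ι → Bool)} (h : Dep F A) : m.real A = QQ F A p := by
  classical
  have := hm.1
  conv_lhs => rw [h.eq_union]
  rw [measureReal_biUnion_finset (fun η _ ζ _ hne => cyl_disj hne)
    (fun η _ => measurableSet_cyl F η)]
  rw [QQ, ← Finset.sum_filter]
  refine Finset.sum_congr (by ext; simp) fun η _ => hm.cyl h0 h1 F η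

lemma Bern.eq {p : ℝ} {m m' : Measure (ι → Bool)} (hm : Bern p m) (hm' : Bern p m')
    (h0 : 0 ≤ p) (h1 : p ≤ 1) {F : Finset ι} {A : Set (ι → Bool)} (h : Dep F A) :
    m.real A = m'.real A := by rw [hm.form h0 h1 h, hm'.form h0 h1 h]

lemma Bern.map {p : ℝ} {m : Measure (ι → Bool)} (hm : Bern p m) {κ : Type*} (σ : κ ≃ ι) :
    Bern p (m.map fun ω e => ω (σ e)) := by
  have h1 := hm.1
  have hmeas : Measurable (fun (ω : ι → Bool) (e : κ) => ω (σ e)) :=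
    measurable_pi_lambda _ fun e => measurable_pi_apply _
  refine ⟨Measure.isProbabilityMeasure_map hmeas.aemeasurable, fun s f => ?_⟩
  have hd : Dep s {ω : κ → Bool | ∀ e ∈ s, ω e = f e} :=
    fun ω ω' H hA e he => by rw [← H e he]; exact hA e he
  rw [Measure.map_apply hmeas hd.meas]
  have := hm.2 (s.map σ.toEmbedding) (fun e => f (σ.symm e))
  have e1 : (fun (ω : ι → Bool) (e : κ) => ω (σ e)) ⁻¹' {ω : κ → Bool | ∀ e ∈ s, ω e = f e}
     = {ω | ∀ e ∈ s.map σ.toEmbedding, ω e = f (σ.symm e)} := by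
    ext ω
    simp
    constructor
    · intro h e he
      simpa using h _ he
    · intro h e he
      simpa using h (σ e) (by simpa using he)
  rw [e1, this]
  simp

lemma Bern.flip {m : Measure (ι → Bool)} (hm : Bern (1/2) m) :
    Bern (1/2) (m.map fun ω e => !(ω e)) := by
  have h1 := hm.1
  have hmeas : Measurable (fun (ω : ι → Bool) (e : ι) => !(ω e)) :=
    measurable_pi_lambda _ fun e => (measurable_of_countable not).comp (measurable_pi_apply _)
  refine ⟨Measure.isProbabilityMeasure_map hmeas.aemeasurable, fun s f => ?_⟩
  have hd : Dep s {ω : ι → Bool | ∀ e ∈ s, ω e = f e} :=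
    fun ω ω' H hA e he => by rw [← H e he]; exact hA e he
  rw [Measure.map_apply hmeas hd.meas]
  have := hm.2 s (fun e => !(f e))
  have e1 : (fun (ω : ι → Bool) (e : ι) => !(ω e)) ⁻¹' {ω : ι → Bool | ∀ e ∈ s, ω e = f e}
     = {ω | ∀ e ∈ s, ω e = !(f e)} := by
    ext ω
    simp only [Set.mem_preimage, Set.mem_ofPred_eq]
    exact forall₂_congr fun e he => by cases ω e <;> cases f e <;> simp
  rw [e1, this]
  congr 1
  refine Finset.prod_congr rfl fun e _ => ?_
  cases f e <;> norm_num

lemma Bern.indep {p : ℝ} {m : Measure (ι → Bool)} (hm : Bern p m) (h0 : 0 ≤ p) (h1 : p ≤ 1)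
    {F G : Finset ι} (hFG : Disjoint F G) {A B : Set (ι → Bool)} (hA : Dep F A) (hB : Dep G B) :
    m.real (A ∩ B) = m.real A * m.real B := by
  classical
  have := hm.1
  have key : ∀ (η : F → Bool) (ζ : G → Bool), m.real (Perc.cyl F η ∩ Perc.cyl G ζ)
      = m.real (Perc.cyl F η) * m.real (Perc.cyl G ζ) := by
    intro η ζ
    let f : ι → Bool := fun e => if e ∈ F then xt F η e else xt G ζ e
    have e1 : Perc.cyl F η ∩ Perc.cyl G ζ = {ω | ∀ e ∈ F ∪ G, ω e = f e} := by
      ext ω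
      simp only [Perc.cyl, Set.mem_inter_iff, Set.mem_ofPred_eq, Finset.mem_union, f]
      constructor
      · rintro ⟨h1, h2⟩ e (he | he)
        · rw [if_pos he, h1 ⟨e, he⟩, xt_apply η ⟨e, he⟩]
        · rw [if_neg (Finset.disjoint_right.1 hFG he), h2 ⟨e, he⟩, xt_apply ζ ⟨e, he⟩]
      · intro h
        refine ⟨fun e => ?_, fun e => ?_⟩
        · rw [h e (Or.inl e.2), if_pos e.2, xt_apply]
        · rw [h e (Or.inr e.2), if_neg (Finset.disjoint_right.1 hFG e.2), xt_apply]
    have e2 : (∏ e ∈ F ∪ G, if f e then p else 1 - p) = wt p η * wt p ζ := by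
      rw [Finset.prod_union hFG, wt, wt, ← Finset.prod_coe_sort F, ← Finset.prod_coe_sort G]
      congr 1
      · exact Finset.prod_congr rfl fun e _ => by
          have : f e = η e := by simp only [f]; rw [if_pos e.2, xt_apply]
          simp only [this]
      · exact Finset.prod_congr rfl fun e _ => by
          have : f e = ζ e := by
            simp only [f]; rw [if_neg (Finset.disjoint_right.1 hFG e.2), xt_apply]
          simp only [this]
    rw [hm.cyl h0 h1, hm.cyl h0 h1, e1, Measure.real, hm.2, e2,
      ENNReal.toReal_ofReal (mul_nonneg (wt_nonneg h0 h1 η) (wt_nonneg h0 h1 ζ))]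
  conv_lhs => rw [hA.eq_union, hB.eq_union]
  conv_rhs => rw [hA.eq_union, hB.eq_union]
  rw [measureReal_biUnion_finset (fun η _ ζ _ hne => cyl_disj hne)
    (fun η _ => measurableSet_cyl F η), measureReal_biUnion_finset (fun η _ ζ _ hne => cyl_disj hne)
    (fun η _ => measurableSet_cyl G η), Finset.sum_mul_sum, Set.iUnion₂_inter,
    measureReal_biUnion_finset]
  · refine Finset.sum_congr rfl fun η _ => ?_
    rw [Set.inter_iUnion₂, measureReal_biUnion_finset]
    · exact Finset.sum_congr rfl fun ζ _ => key η ζ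
    · intro ζ _ ζ' _ hne
      exact ((cyl_disj hne).mono Set.inter_subset_right Set.inter_subset_right)
    · exact fun ζ _ => (measurableSet_cyl F η).inter (measurableSet_cyl G ζ)
  · intro η _ η' _ hne
    exact ((cyl_disj hne).mono Set.inter_subset_left Set.inter_subset_left)
  · exact fun ζ _ => (measurableSet_cyl F ζ).inter
      (Finset.measurableSet_biUnion _ fun η _ => measurableSet_cyl G η)

lemma xt_mono {F : Finset ι} {η ζ : F → Bool} (h : η ≤ ζ) (e : ι) (he : xt F η e = true) :
    xt F ζ e = true := by
  classical
  by_cases hF : e ∈ F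
  · rw [xt_apply _ ⟨e, hF⟩] at he ⊢
    have := h ⟨e, hF⟩
    rw [he] at this
    exact top_le_iff.1 this
  · simp [xt, hF] at he

lemma Bern.harris {p : ℝ} {m : Measure (ι → Bool)} (hm : Bern p m) (h0 : 0 ≤ p) (h1 : p ≤ 1)
    {F : Finset ι} {A B : Set (ι → Bool)} (hA : Dep F A) (hB : Dep F B) (iA : Incr A)
    (iB : Incr B) : m.real A * m.real B ≤ m.real (A ∩ B) := by
  classical
  have := hm.1
  have hu : m.real Set.univ = QQ F Set.univ p := hm.form h0 h1 (fun _ _ _ _ => trivial)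
  rw [hm.form h0 h1 hA, hm.form h0 h1 hB, hm.form h0 h1 (hA.inter hB)]
  have hmono : ∀ {A : Set (ι → Bool)}, Incr A →
      Monotone (fun η : F → Bool => if xt F η ∈ A then (1:ℝ) else 0) := by
    intro A iA η ζ h
    dsimp only
    by_cases h1 : xt F η ∈ A
    · rw [if_pos h1, if_pos (iA _ _ (xt_mono h) h1)]
    · rw [if_neg h1]; split_ifs <;> norm_num
  have := fkg (μ := fun η : F → Bool => wt p η)
    (f := fun η => if xt F η ∈ A then (1:ℝ) else 0) (g := fun η => if xt F η ∈ B then (1:ℝ) else 0)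
    (fun η => wt_nonneg h0 h1 η) (fun η => by dsimp; split_ifs <;> norm_num)
    (fun η => by dsimp; split_ifs <;> norm_num) (hmono iA) (hmono iB) (by
      intro a b
      simp only [wt]
      rw [← Finset.prod_mul_distrib, ← Finset.prod_mul_distrib]
      refine le_of_eq (Finset.prod_congr rfl fun e _ => ?_)
      simp only [Pi.inf_apply, Pi.sup_apply]
      have hb : ∀ x y : Bool, ((if x = true then p else 1 - p) * if y = true then p else 1 - p) =
          (if min x y = true then p else 1 - p) * if max x y = true then p else 1 - p := by
        intro x y; cases x <;> cases y <;> simp [mul_comm]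
      exact hb (a e) (b e))
  have hs : ∑ η : F → Bool, wt p η = 1 := by
    have := hu.symm
    simpa [QQ] using this
  rw [hs, one_mul] at this
  have hq : ∀ A : Set (ι → Bool), QQ F A p =
      ∑ η : F → Bool, wt p η * (if xt F η ∈ A then (1:ℝ) else 0) := by
    intro A
    exact Finset.sum_congr rfl fun η _ => by split_ifs <;> simp
  rw [hq, hq, hq]
  refine this.trans_eq (Finset.sum_congr rfl fun η _ => ?_)
  by_cases h1 : xt F η ∈ A <;> by_cases h2 : xt F η ∈ B <;> simp [h1, h2]

def Piv (A : Set (ι → Bool)) (e : ι) : Set (ι → Bool) :=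
  {ω | ω e = false ∧ ω ∉ A ∧ ∃ ω' ∈ A, ω' e = true ∧ ∀ f, f ≠ e → ω' f = ω f}

lemma xt_upd {F : Finset ι} [DecidableEq F] (η : F → Bool) (e : F) (b : Bool) :
    xt F (Function.update η e b) e = b ∧
    ∀ f, f ≠ (e : ι) → xt F (Function.update η e b) f = xt F η f := by
  refine ⟨by rw [xt_apply]; simp, fun f hf => ?_⟩
  by_cases h : f ∈ F
  · rw [xt_apply _ ⟨f, h⟩, xt_apply _ ⟨f, h⟩, Function.update_of_ne]
    intro h'; exact hf (by rw [← h'])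
  · simp [xt, h]

lemma Dep.piv {F : Finset ι} {A : Set (ι → Bool)} (h : Dep F A) {e : ι} (he : e ∈ F) :
    Dep F (Piv A e) := by
  classical
  rintro ω ω' H ⟨h1, h2, ζ, h3, h4, h5⟩
  refine ⟨by rw [← H e he]; exact h1, h.compl _ _ H h2, Function.update ω' e true, ?_, by simp,
    fun f hf => by simp [hf]⟩
  refine h ζ _ (fun f hf => ?_) h3
  by_cases hfe : f = e
  · subst hfe; simp [h4]
  · rw [h5 f hfe, Function.update_of_ne hfe, H f hf]

/-- Russo's formula (as an inequality). -/
lemma Bern.russo {p : ℝ} {m : Measure (ι → Bool)} (hm : Bern p m) (h0 : 0 ≤ p) (h1 : p ≤ 1)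
    {F : Finset ι} {A : Set (ι → Bool)} (hA : Dep F A) (iA : Incr A) :
    ∃ D, HasDerivAt (QQ F A) D p ∧ ∑ e ∈ F, m.real (Piv A e) ≤ D := by
  classical
  let W : F → (F → Bool) → ℝ := fun e η => ∏ f ∈ Finset.univ.erase e, if η f then p else 1 - p
  have hW : ∀ e η, 0 ≤ W e η := fun e η =>
    Finset.prod_nonneg fun e _ => by split_ifs <;> linarith
  have hd : ∀ η : F → Bool, HasDerivAt (fun q => wt q η)
      (∑ e : F, W e η * (if η e then 1 else -1)) p := by
    intro η
    have := HasDerivAt.fun_finsetProd (u := (Finset.univ : Finset F)) (x := p)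
      (f := fun (e : F) (q : ℝ) => if η e then q else 1 - q)
      (f' := fun e => if η e then (1:ℝ) else -1) (fun e _ => by
        by_cases h : η e = true
        · simpa [h] using hasDerivAt_id' p
        · simpa [h] using (hasDerivAt_id p).const_sub 1)
    simpa [wt, W] using this
  have hD : HasDerivAt (QQ F A) (∑ η : F → Bool, if xt F η ∈ A then
      ∑ e : F, W e η * (if η e then 1 else -1) else 0) p := by
    have : QQ F A = fun q => ∑ η : F → Bool, if xt F η ∈ A then wt q η else 0 := rfl
    rw [this]
    refine HasDerivAt.fun_sum fun η _ => ?_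
    split_ifs
    · exact hd η
    · exact hasDerivAt_const _ _
  refine ⟨_, hD, ?_⟩
  have e1 : (∑ η : F → Bool, if xt F η ∈ A then
      ∑ e : F, W e η * (if η e then (1:ℝ) else -1) else 0) = ∑ e : F, ∑ η : F → Bool,
      if xt F η ∈ A then W e η * (if η e then (1:ℝ) else -1) else 0 := by
    rw [Finset.sum_comm]
    refine Finset.sum_congr rfl fun η _ => ?_
    split_ifs <;> simp
  rw [e1, ← Finset.sum_coe_sort]
  refine Finset.sum_le_sum fun e _ => ?_
  rw [hm.form h0 h1 (hA.piv e.2)]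
  -- pair up η with its flip at e
  let fl : (F → Bool) → (F → Bool) := fun η => Function.update η e (!(η e))
  have hfl : Function.Involutive fl := fun η => by simp [fl]
  set g : (F → Bool) → ℝ := fun η => if xt F η ∈ A then W e η * (if η e then (1:ℝ) else -1) else 0
    with hg
  have e2 : ∑ η, g η = ∑ η : F → Bool, if η e = false then g η + g (fl η) else 0 := by
    have : ∑ η, g η = ∑ η : F → Bool, ((if η e = false then g η else 0) +
        (if η e = true then g η else 0)) :=
      Finset.sum_congr rfl fun η _ => by
        by_cases h : η e = true <;> simp [h]
    rw [this, Finset.sum_add_distrib, ← Equiv.sum_comp (hfl.toPerm)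
      (fun η : F → Bool => if η e = true then g η else 0), ← Finset.sum_add_distrib]
    refine Finset.sum_congr rfl fun η _ => ?_
    by_cases h : η e = true <;> simp [h, fl]
  rw [e2, QQ]
  refine Finset.sum_le_sum fun η _ => ?_
  have hWf : W e (fl η) = W e η := Finset.prod_congr rfl fun f hf => by
    simp only [fl, Function.update_of_ne (Finset.ne_of_mem_erase hf)]
  by_cases he : η e = true
  · have : xt F η ∉ Piv A e := fun h => by
      have := h.1; rw [xt_apply, he] at this; cases this
    simp [he, this]
  · have he' : η e = false := by simpa using he
    have hfe : fl η e = true := by simp [fl, he']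
    have hup := xt_upd η e (!(η e))
    have hwt : wt p η = (1 - p) * W e η := by
      rw [wt, ← Finset.mul_prod_erase _ _ (Finset.mem_univ e)]; simp [W, he']
    by_cases h2 : xt F η ∈ A
    · have h3 : xt F (fl η) ∈ A := by
        refine iA _ _ (fun f hf => ?_) h2
        by_cases hfe : f = e
        · subst hfe; rw [xt_apply, he'] at hf; cases hf
        · rw [← hf]; exact hup.2 f hfe
      have : xt F η ∉ Piv A e := fun h => h.2.1 h2
      simp [this, he', hg, h2, h3, hWf, hfe]
    · have hp : xt F η ∈ Piv A e ↔ xt F (fl η) ∈ A := by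
        constructor
        · rintro ⟨_, _, ζ, h3, h4, h5⟩
          refine hA _ _ (fun f hf => ?_) h3
          by_cases hfe : f = e
          · subst hfe; rw [h4, xt_apply, ‹fl η e = true›]
          · rw [h5 f hfe]; exact (hup.2 f hfe).symm
        · intro h3
          exact ⟨by rw [xt_apply, he'], h2, _, h3, by rw [xt_apply, hfe], fun f hf => hup.2 f hf⟩
      by_cases h3 : xt F (fl η) ∈ A
      · rw [if_pos (hp.2 h3)]
        simp only [hg, he', h2, h3, hWf, hfe, hwt, if_true, if_false]
        nlinarith [hW e η]
      · simp [hp, h3, he', hg, h2]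

end infra

abbrev V := ℤ × ℤ
abbrev E := V × Bool
abbrev Om := E → Bool

def tgt (e : E) : V := if e.2 then (e.1.1, e.1.2 + 1) else (e.1.1 + 1, e.1.2)

def st (ω : Om) (u v : V) : Prop :=
  ∃ e : E, ω e = true ∧ ((u = e.1 ∧ v = tgt e) ∨ (v = e.1 ∧ u = tgt e))

def nb (u v : V) : Prop :=
  (u.1 = v.1 ∧ (v.2 = u.2 + 1 ∨ u.2 = v.2 + 1)) ∨ (u.2 = v.2 ∧ (v.1 = u.1 + 1 ∨ u.1 = v.1 + 1))

lemma nb.symm {u v : V} (h : nb u v) : nb v u := by unfold nb at *; omega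

lemma nb_tgt (e : E) : nb e.1 (tgt e) := by
  unfold nb tgt; split_ifs <;> simp

lemma st.nb {ω : Om} {u v : V} (h : st ω u v) : nb u v := by
  obtain ⟨e, -, ⟨rfl, rfl⟩ | ⟨rfl, rfl⟩⟩ := h
  · exact nb_tgt e
  · exact (nb_tgt e).symm

lemma st.symm {ω : Om} {u v : V} (h : st ω u v) : st ω v u := by
  obtain ⟨e, h, h'⟩ := h; exact ⟨e, h, h'.symm⟩

/-- path in the set `U` of vertices -/
def pth (U : Set V) : V → V → Prop :=
  Relation.ReflTransGen fun u v => nb u v ∧ u ∈ U ∧ v ∈ U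

def cn (ω : Om) (R : Set V) : V → V → Prop :=
  Relation.ReflTransGen fun u v => st ω u v ∧ u ∈ R ∧ v ∈ R

lemma rtg_symm {α : Type*} {r : α → α → Prop} (h : ∀ a b, r a b → r b a) {a b : α}
    (hab : Relation.ReflTransGen r a b) : Relation.ReflTransGen r b a := by
  induction hab with
  | refl => exact .refl
  | tail _ h2 ih => exact .head (h _ _ h2) ih

lemma cn.symm {ω : Om} {R : Set V} {a b : V} (h : cn ω R a b) : cn ω R b a :=
  rtg_symm (fun _ _ h => ⟨h.1.symm, h.2.2, h.2.1⟩) h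

lemma cn.trans {ω : Om} {R : Set V} {a b c : V} (h : cn ω R a b) (h' : cn ω R b c) : cn ω R a c :=
  Relation.ReflTransGen.trans h h'

lemma cn.mono {ω : Om} {R R' : Set V} {a b : V} (h : cn ω R a b) (hR : R ⊆ R') : cn ω R' a b :=
  Relation.ReflTransGen.mono (fun _ _ h => ⟨h.1, hR h.2.1, hR h.2.2⟩) _ _ h

lemma pth.symm {R : Set V} {a b : V} (h : pth R a b) : pth R b a :=
  rtg_symm (fun _ _ h => ⟨h.1.symm, h.2.2, h.2.1⟩) h

lemma pth.trans {R : Set V} {a b c : V} (h : pth R a b) (h' : pth R b c) : pth R a c :=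
  Relation.ReflTransGen.trans h h'

lemma pth.mono {R R' : Set V} {a b : V} (h : pth R a b) (hR : R ⊆ R') : pth R' a b :=
  Relation.ReflTransGen.mono (fun _ _ h => ⟨h.1, hR h.2.1, hR h.2.2⟩) _ _ h

lemma pth.one {R : Set V} {a b : V} (h : nb a b) (ha : a ∈ R) (hb : b ∈ R) : pth R a b :=
  .single ⟨h, ha, hb⟩

lemma pth.mem {R : Set V} {a b : V} (h : pth R a b) (ha : a ∈ R) : b ∈ R := by
  induction h with
  | refl => exact ha
  | tail _ h _ => exact h.2.2

lemma cn.mem {ω : Om} {R : Set V} {a b : V} (h : cn ω R a b) (ha : a ∈ R) : b ∈ R := by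
  induction h with
  | refl => exact ha
  | tail _ h _ => exact h.2.2

/-- the cluster of `a` in `R` -/
def cl (ω : Om) (R : Set V) (a : V) : Set V := {v | cn ω R a v}

lemma cn.pth {ω : Om} {R : Set V} {a b : V} (h : cn ω R a b) : pth (cl ω R a) a b := by
  induction h with
  | refl => exact .refl
  | tail h1 h2 ih => exact .tail ih ⟨h2.1.nb, h1, .tail h1 h2⟩

lemma cl_sub {ω : Om} {R : Set V} {a : V} (ha : a ∈ R) : cl ω R a ⊆ R := fun _ h => cn.mem h ha

def ind (P : Prop) [Decidable P] : ZMod 2 := if P then 1 else 0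

lemma par {U : Set V} {A B : V} (h : pth U A B) : ∃ N : V → ZMod 2,
    (∀ u v, u ∉ U → v ∉ U → v = (u.1, u.2 + 1) →
      N u + N v = ind (A.1 < v.1 ∧ A.2 = v.2) + ind (B.1 < v.1 ∧ B.2 = v.2)) ∧
    (∀ u v, u ∉ U → v ∉ U → v = (u.1 + 1, u.2) → N u = N v) ∧
    (∀ v, (∀ u ∈ U, v.1 ≤ u.1) → N v = 0) ∧
    (∀ v, v ∉ U → (∀ u ∈ U, u.1 ≤ v.1) → N v = ind (A.2 ≤ v.2) + ind (B.2 ≤ v.2)) := by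
  have h2 : (2 : ZMod 2) = 0 := rfl
  induction h with
  | refl =>
    refine ⟨fun _ => 0, ?_, ?_, ?_, ?_⟩
    · intros; simp [CharTwo.add_self_eq_zero]
    · intros; rfl
    · intros; rfl
    · intros; simp [CharTwo.add_self_eq_zero]
  | @tail p q _ hpq ih =>
    obtain ⟨N, i1, i2, i3, i4⟩ := ih
    obtain ⟨hnb, hp, hq⟩ := hpq
    refine ⟨fun v => N v + if p.1 < v.1 then ind (p.2 ≤ v.2) + ind (q.2 ≤ v.2) else 0,
      ?_, ?_, ?_, ?_⟩
    · intro u v hu hv huv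
      have := i1 u v hu hv huv
      have hpv : p ≠ v := fun h => hv (h ▸ hp)
      have hqv : q ≠ v := fun h => hv (h ▸ hq)
      have key : (if p.1 < u.1 then ind (p.2 ≤ u.2) + ind (q.2 ≤ u.2) else 0) +
          (if p.1 < v.1 then ind (p.2 ≤ v.2) + ind (q.2 ≤ v.2) else 0) =
          ind (p.1 < v.1 ∧ p.2 = v.2) + ind (q.1 < v.1 ∧ q.2 = v.2) := by
        subst huv
        simp only [ne_eq, Prod.ext_iff] at hpv hqv
        unfold nb at hnb
        unfold ind
        simp only
        split_ifs <;> first | rfl | (exfalso; omega)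
      linear_combination this + key + ind (p.1 < v.1 ∧ p.2 = v.2) * h2
    · intro u v hu hv huv
      have := i2 u v hu hv huv
      have hpv : p ≠ u := fun h => hu (h ▸ hp)
      have hqv : q ≠ u := fun h => hu (h ▸ hq)
      have key : (if p.1 < u.1 then ind (p.2 ≤ u.2) + ind (q.2 ≤ u.2) else 0) =
          (if p.1 < v.1 then ind (p.2 ≤ v.2) + ind (q.2 ≤ v.2) else 0) := by
        subst huv
        simp only [ne_eq, Prod.ext_iff] at hpv hqv
        unfold nb at hnb
        unfold ind
        simp only
        split_ifs <;> first | rfl | (exfalso; omega)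
      dsimp only
      rw [this, key]
    · intro v hv
      have := hv p hp
      simp only [i3 v hv, if_neg (not_lt.2 this), add_zero]
    · intro v hv hv'
      have := i4 v hv hv'
      have hpv : p ≠ v := fun h => hv (h ▸ hp)
      have hqv : q ≠ v := fun h => hv (h ▸ hq)
      have h3 := hv' p hp
      have h4 := hv' q hq
      have key : (if p.1 < v.1 then ind (p.2 ≤ v.2) + ind (q.2 ≤ v.2) else 0) =
          ind (p.2 ≤ v.2) + ind (q.2 ≤ v.2) := by
        simp only [ne_eq, Prod.ext_iff] at hpv hqv
        unfold nb at hnb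
        unfold ind
        split_ifs <;> first | rfl | (exfalso; omega)
      dsimp only
      rw [this, key]
      linear_combination ind (p.2 ≤ v.2) * h2

/-- Two paths crossing a rectangle in different directions intersect. -/
lemma T1 {U Z : Set V} (hd : Disjoint U Z) {A B C D : V} (hU : pth U A B) (hZ : pth Z C D)
    (hB : B ∈ U) (hC : C ∈ Z)
    (h1 : ∀ v ∈ U, C.1 ≤ v.1 ∧ v.1 ≤ D.1) (h2 : ∀ v ∈ Z, A.2 ≤ v.2 ∧ v.2 ≤ B.2) : False := by
  set B' : V := (B.1, B.2 + 1)
  set U' : Set V := insert B' U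
  have hU' : pth U' A B' := (hU.mono (Set.subset_insert _ _)).trans
    (pth.one (by simp [nb, B']) (Set.mem_insert_of_mem _ hB) (Set.mem_insert _ _))
  have hd' : ∀ v ∈ Z, v ∉ U' := by
    rintro v hv (rfl | h)
    · have := (h2 _ hv).2; simp [B'] at this
    · exact Set.disjoint_left.1 hd h hv
  have h1' : ∀ v ∈ U', C.1 ≤ v.1 ∧ v.1 ≤ D.1 := by
    rintro v (rfl | h)
    · exact h1 B hB
    · exact h1 v h
  obtain ⟨N, i1, i2, i3, i4⟩ := par hU'
  have hD : D ∈ Z := hZ.mem hC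
  have hND : N D = 1 := by
    rw [i4 D (hd' _ hD) fun u hu => (h1' u hu).2]
    have := h2 D hD
    have h3 : ¬ (B.2 + 1 ≤ D.2) := by omega
    simp [ind, B', h3, this.1]
  have hNC : N C = 0 := i3 C fun u hu => (h1' u hu).1
  have hv : ∀ u v, u ∈ Z → v ∈ Z → v = (u.1, u.2 + 1) → N u = N v := by
    intro u v hu hv h
    have := i1 u v (hd' u hu) (hd' v hv) h
    have h3 := h2 u hu
    have h4 := h2 v hv
    have e1 : A.2 ≠ v.2 := by rw [h] at h4 ⊢; simp at h4 ⊢; omega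
    have e2 : B.2 + 1 ≠ v.2 := by omega
    simp [ind, B', e1, e2] at this
    exact CharTwo.add_eq_zero.1 this
  have key : ∀ q, pth Z C q → N C = N q := by
    intro q hq
    induction hq with
    | refl => rfl
    | @tail p q h3 h4 ih =>
      refine ih.trans ?_
      obtain ⟨h5, hp, hq⟩ := h4
      rcases h5 with ⟨h6, h7 | h7⟩ | ⟨h6, h7 | h7⟩
      · exact hv p q hp hq (Prod.ext h6.symm h7)
      · exact (hv q p hq hp (Prod.ext h6 h7)).symm
      · exact i2 p q (hd' p hp) (hd' q hq) (Prod.ext h7 h6.symm)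
      · exact (i2 q p (hd' q hq) (hd' p hp) (Prod.ext h7 h6)).symm
  have key := key D hZ
  rw [hNC, hND] at key
  exact absurd key (by decide)


lemma pth.map {U U' : Set V} {τ : V → V} (hτ : ∀ u v, nb u v → nb (τ u) (τ v))
    (hU : ∀ u ∈ U, τ u ∈ U') {a b : V} (h : pth U a b) : pth U' (τ a) (τ b) := by
  induction h with
  | refl => exact .refl
  | tail _ h2 ih => exact .tail ih ⟨hτ _ _ h2.1, hU _ h2.2.1, hU _ h2.2.2⟩

lemma pth_col {U : Set V} (c a b : ℤ) (hab : a ≤ b) (h : ∀ y, a ≤ y → y ≤ b → (c, y) ∈ U) :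
    pth U (c, a) (c, b) := by
  obtain ⟨k, rfl⟩ := Int.le.dest hab
  clear hab
  induction k with
  | zero => simp only [Nat.cast_zero, add_zero]; exact .refl
  | succ k ih =>
    refine .tail (ih fun y h1 h2 => h y h1 (by push_cast; omega)) ⟨?_, h _ (by omega) (by push_cast; omega), h _ (by omega) le_rfl⟩
    left; refine ⟨rfl, Or.inl ?_⟩; push_cast; omega

lemma T2 {U Z : Set V} (hd : Disjoint U Z) {A B C D : V} {N L M : ℤ} (hU : pth U A B)
    (hZ : pth Z C D) (hA : A ∈ U) (hC : C ∈ Z) (hAN : A.1 = N) (hBN : B.1 = N) (hDN : D.1 = N)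
    (h1 : ∀ v ∈ U, C.1 ≤ v.1 ∧ v.1 ≤ N) (h2 : ∀ v ∈ Z, v.1 ≤ N ∧ L ≤ v.2 ∧ v.2 ≤ M)
    (hAD : A.2 ≤ D.2) (hDB : D.2 ≤ B.2) : False := by
  have hB : B ∈ U := hU.mem hA
  have hD : D ∈ Z := hZ.mem hC
  have hAD' : A ≠ D := fun h => Set.disjoint_left.1 hd hA (h ▸ hD)
  have hBD' : B ≠ D := fun h => Set.disjoint_left.1 hd hB (h ▸ hD)
  have hAD2 : A.2 < D.2 := lt_of_le_of_ne hAD fun h => hAD' (Prod.ext (by omega) h)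
  have hBD2 : D.2 < B.2 := lt_of_le_of_ne hDB fun h => hBD' (Prod.ext (by omega) h.symm)
  have hCN := (h2 C hC).1
  obtain ⟨a1, a2⟩ := A
  obtain ⟨b1, b2⟩ := B
  obtain ⟨d1, d2⟩ := D
  simp only at *
  subst hAN hBN
  subst hDN
  set U' : Set V := U ∪ {v | v.1 = d1 + 1 ∧ (b2 ≤ v.2 ∨ v.2 ≤ a2)}
  set Z' : Set V := Z ∪ {v | v.2 = d2 ∧ d1 + 1 ≤ v.1 ∧ v.1 ≤ d1 + 2}
  have hUU : U ⊆ U' := Set.subset_union_left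
  have hZZ : Z ⊆ Z' := Set.subset_union_left
  have hU' : pth U' (d1 + 1, min L a2) (d1 + 1, max M b2) := by
    refine ((pth_col _ _ a2 (min_le_right _ _) fun y _ h => Or.inr ⟨rfl, Or.inr h⟩).trans
      (.head (b := (d1, a2)) ⟨?_, Or.inr ⟨rfl, Or.inr le_rfl⟩, hUU hA⟩ ((hU.mono hUU).trans
      (.head (b := (d1 + 1, b2)) ⟨?_, hUU hB, Or.inr ⟨rfl, Or.inl le_rfl⟩⟩
       (pth_col _ _ _ (le_max_right _ _) fun y h _ => Or.inr ⟨rfl, Or.inl h⟩)))))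
    · simp [nb]
    · simp [nb]
  have hZ' : pth Z' C (d1 + 2, d2) := by
    refine (hZ.mono hZZ).trans ((pth.one (b := (d1 + 1, d2)) ?_ (hZZ hD) ?_).trans (pth.one ?_ ?_ ?_))
    · simp [nb]
    · exact Or.inr ⟨rfl, le_rfl, by simp⟩
    · simp [nb]; try omega
    · exact Or.inr ⟨rfl, le_rfl, by simp⟩
    · exact Or.inr ⟨rfl, by simp, by simp⟩
  refine T1 (U := U') (Z := Z') ?_ hU' hZ' ?_ (hZZ hC) ?_ ?_
  · rw [Set.disjoint_left]
    rintro v (hv | ⟨hv1, hv2⟩) (hv' | ⟨hv3, hv4, hv5⟩)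
    · exact Set.disjoint_left.1 hd hv hv'
    · have := (h1 v hv).2; omega
    · have := (h2 v hv').1; omega
    · omega
  · exact Or.inr ⟨rfl, Or.inl (le_max_right _ _)⟩
  · rintro v (hv | ⟨hv1, hv2⟩)
    · have := h1 v hv; simp only; omega
    · simp only; omega
  · have := h2 _ hD
    rintro v (hv | ⟨hv1, hv2⟩)
    · have := h2 v hv; simp only; omega
    · simp only at *; omega

lemma cl_disj {ω : Om} {R R1 R2 : Set V} (h1 : R1 ⊆ R) (h2 : R2 ⊆ R) {A C : V}
    (h : ¬ cn ω R A C) : Disjoint (cl ω R1 A) (cl ω R2 C) := by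
  rw [Set.disjoint_left]
  exact fun v hv hv' => h ((cn.mono hv h1).trans (cn.mono hv' h2).symm)

lemma G1 {ω : Om} {R R1 R2 : Set V} (hR1 : R1 ⊆ R) (hR2 : R2 ⊆ R) {A B C D : V}
    (hU : cn ω R1 A B) (hZ : cn ω R2 C D) (hA : A ∈ R1) (hC : C ∈ R2)
    (h1 : ∀ v ∈ R1, C.1 ≤ v.1 ∧ v.1 ≤ D.1) (h2 : ∀ v ∈ R2, A.2 ≤ v.2 ∧ v.2 ≤ B.2) :
    cn ω R A C := by
  by_contra h
  exact T1 (cl_disj hR1 hR2 h) hU.pth hZ.pth hU .refl (fun v hv => h1 v (cl_sub hA hv))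
    (fun v hv => h2 v (cl_sub hC hv))

lemma G2 {ω : Om} {R R1 R2 : Set V} (hR1 : R1 ⊆ R) (hR2 : R2 ⊆ R) {A B C D : V} {N L M : ℤ}
    (hU : cn ω R1 A B) (hZ : cn ω R2 C D) (hA : A ∈ R1) (hC : C ∈ R2)
    (hAN : A.1 = N) (hBN : B.1 = N) (hDN : D.1 = N)
    (h1 : ∀ v ∈ R1, C.1 ≤ v.1 ∧ v.1 ≤ N) (h2 : ∀ v ∈ R2, v.1 ≤ N ∧ L ≤ v.2 ∧ v.2 ≤ M)
    (hAD : A.2 ≤ D.2) (hDB : D.2 ≤ B.2) : cn ω R A C := by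
  by_contra h
  exact T2 (cl_disj hR1 hR2 h) hU.pth hZ.pth .refl .refl hAN hBN hDN
    (fun v hv => h1 v (cl_sub hA hv)) (fun v hv => h2 v (cl_sub hC hv)) hAD hDB

lemma G2' {ω : Om} {R R1 R2 : Set V} (hR1 : R1 ⊆ R) (hR2 : R2 ⊆ R) {A B C D : V} {N L M : ℤ}
    (hU : cn ω R1 A B) (hZ : cn ω R2 C D) (hA : A ∈ R1) (hC : C ∈ R2)
    (hAN : A.1 = N) (hBN : B.1 = N) (hDN : D.1 = N)
    (h1 : ∀ v ∈ R1, N ≤ v.1 ∧ v.1 ≤ C.1) (h2 : ∀ v ∈ R2, N ≤ v.1 ∧ L ≤ v.2 ∧ v.2 ≤ M)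
    (hAD : A.2 ≤ D.2) (hDB : D.2 ≤ B.2) : cn ω R A C := by
  by_contra h
  have hd := cl_disj hR1 hR2 h
  let τ : V → V := fun v => (-v.1, v.2)
  have hτ : ∀ u v, nb u v → nb (τ u) (τ v) := by
    intro u v h; simp only [nb, τ] at *; omega
  have e : ∀ v, τ (τ v) = v := fun v => by simp [τ]
  refine T2 (U := {v | τ v ∈ cl ω R1 A}) (Z := {v | τ v ∈ cl ω R2 C}) (N := -N) (L := L) (M := M) ?_
    (hU.pth.map hτ (fun u hu => ?_)) (hZ.pth.map hτ (fun u hu => ?_)) ?_ ?_ ?_ ?_ ?_ ?_ ?_ hAD hDB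
  · rw [Set.disjoint_left]; exact fun v hv hv' => Set.disjoint_left.1 hd hv hv'
  · change τ (τ u) ∈ cl ω R1 A; rwa [e]
  · change τ (τ u) ∈ cl ω R2 C; rwa [e]
  · change τ (τ A) ∈ cl ω R1 A; rw [e]; exact .refl
  · change τ (τ C) ∈ cl ω R2 C; rw [e]; exact .refl
  · simp [τ, hAN]
  · simp [τ, hBN]
  · simp [τ, hDN]
  · intro v hv; have := h1 _ (cl_sub hA hv); simp only [τ] at *; omega
  · intro v hv; have := h2 _ (cl_sub hC hv); simp only [τ] at *; omega

/-- 1-Lipschitz functions -/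
def Lip (f : V → ℤ) : Prop := ∀ u v, nb u v → f v ≤ f u + 1

/-- last visit to level `s` -/
lemma cn.last {ω : Om} {R : Set V} {f : V → ℤ} (hf : Lip f) {s : ℤ} {a b : V} (ha : a ∈ R)
    (h : cn ω R a b) (h1 : f a ≤ s) (h2 : s ≤ f b) :
    ∃ c ∈ R, f c = s ∧ cn ω {v | v ∈ R ∧ s ≤ f v} c b := by
  induction h with
  | refl => exact ⟨a, ha, by omega, .refl⟩
  | @tail p q h3 h4 ih =>
    have := hf _ _ h4.1.nb
    by_cases hp : s ≤ f p
    · obtain ⟨c, hc, h5, h6⟩ := ih hp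
      exact ⟨c, hc, h5, .tail h6 ⟨h4.1, ⟨h4.2.1, hp⟩, ⟨h4.2.2, h2⟩⟩⟩
    · exact ⟨q, h4.2.2, by omega, .refl⟩

/-- first visit to level `t` -/
lemma cn.first {ω : Om} {R : Set V} {f : V → ℤ} (hf : Lip f) {t : ℤ} {a b : V} (ha : a ∈ R)
    (h : cn ω R a b) (h1 : f a ≤ t) (h2 : t ≤ f b) :
    ∃ c ∈ R, f c = t ∧ cn ω {v | v ∈ R ∧ f v ≤ t} a c := by
  obtain ⟨c, hc, h3, h4⟩ := cn.last (f := fun v => - f v) (s := -t)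
    (fun u v h => by have := hf _ _ h.symm; simp only; omega) (h.mem ha) h.symm (by omega) (by omega)
  exact ⟨c, hc, by omega, h4.symm.mono fun v hv => ⟨hv.1, by have := hv.2; omega⟩⟩

lemma lip1 : Lip fun v => v.1 := fun u v h => by unfold nb at h; simp only; omega
lemma lip2 : Lip fun v => v.2 := fun u v h => by unfold nb at h; simp only; omega
lemma lip3 : Lip fun v => -v.1 := fun u v h => by unfold nb at h; simp only; omega
lemma lip4 : Lip fun v => -v.2 := fun u v h => by unfold nb at h; simp only; omega

def nm (v : V) : ℤ := max (max v.1 (-v.1)) (max v.2 (-v.2))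

lemma lipn : Lip nm := fun u v h => by unfold nb at h; unfold nm; omega

def Rc (a b c d : ℤ) : Set V := {v | a ≤ v.1 ∧ v.1 ≤ b ∧ c ≤ v.2 ∧ v.2 ≤ d}

lemma mem_Rc {a b c d : ℤ} {v : V} : v ∈ Rc a b c d ↔ a ≤ v.1 ∧ v.1 ≤ b ∧ c ≤ v.2 ∧ v.2 ≤ d :=
  Iff.rfl

lemma Rc_fin (a b c d : ℤ) : (Rc a b c d).Finite := by
  refine ((Set.finite_Icc a b).prod (Set.finite_Icc c d)).subset ?_
  rintro v ⟨h1, h2, h3, h4⟩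
  exact ⟨⟨h1, h2⟩, h3, h4⟩

/-- an arm crosses one of four rectangles -/
lemma arm {ω : Om} {R : Set V} {a b : V} {s t : ℤ} (hst : s ≤ t) (ha : a ∈ R)
    (h : cn ω R a b) (h1 : nm a ≤ s) (h2 : t ≤ nm b) :
    ∃ c d : V, c ∈ R ∧ cn ω R a c ∧
    (((c.1 = s ∧ d.1 = t) ∧ c ∈ Rc s t (-t) t ∧ cn ω (R ∩ Rc s t (-t) t) c d) ∨
     ((c.1 = -s ∧ d.1 = -t) ∧ c ∈ Rc (-t) (-s) (-t) t ∧ cn ω (R ∩ Rc (-t) (-s) (-t) t) c d) ∨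
     ((c.2 = s ∧ d.2 = t) ∧ c ∈ Rc (-t) t s t ∧ cn ω (R ∩ Rc (-t) t s t) c d) ∨
     ((c.2 = -s ∧ d.2 = -t) ∧ c ∈ Rc (-t) t (-t) (-s) ∧ cn ω (R ∩ Rc (-t) t (-t) (-s)) c d)) := by
  obtain ⟨d, hd, h3, h4⟩ := cn.first lipn ha h (by omega) h2
  have key : ∀ f : V → ℤ, Lip f → f a ≤ s → f d = t → ∃ c, c ∈ R ∧ nm c ≤ t ∧ f c = s ∧ cn ω R a c ∧
      cn ω {v | v ∈ R ∧ nm v ≤ t ∧ s ≤ f v} c d := by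
    intro f hf h5 h6
    obtain ⟨c, hc, h7, h8⟩ := cn.last hf (s := s) (⟨ha, by omega⟩ : a ∈ {v | v ∈ R ∧ nm v ≤ t}) h4 h5 (by omega)
    refine ⟨c, hc.1, hc.2, h7, ?_, h8.mono fun v hv => ⟨hv.1.1, hv.1.2, hv.2⟩⟩
    exact (h4.mono fun v hv => hv.1).trans (h8.mono fun v hv => hv.1.1).symm
  have h5 : d.1 = t ∨ -d.1 = t ∨ d.2 = t ∨ -d.2 = t := by unfold nm at h3; omega
  have h6 : a.1 ≤ s ∧ -a.1 ≤ s ∧ a.2 ≤ s ∧ -a.2 ≤ s := by unfold nm at h1; omega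
  rcases h5 with h5 | h5 | h5 | h5
  · obtain ⟨c, c1, c2, c3, c4, c5⟩ := key _ lip1 h6.1 h5
    refine ⟨c, d, c1, c4, Or.inl ⟨⟨c3, h5⟩, ?_, c5.mono ?_⟩⟩
    · simp only [nm, mem_Rc] at *; omega
    · rintro v ⟨v1, v2, v3⟩; refine ⟨v1, ?_⟩; simp only [nm, mem_Rc] at *; omega
  · obtain ⟨c, c1, c2, c3, c4, c5⟩ := key _ lip3 h6.2.1 h5
    refine ⟨c, d, c1, c4, Or.inr (Or.inl ⟨⟨by omega, by omega⟩, ?_, c5.mono ?_⟩)⟩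
    · simp only [nm, mem_Rc] at *; omega
    · rintro v ⟨v1, v2, v3⟩; refine ⟨v1, ?_⟩; simp only [nm, mem_Rc] at *; omega
  · obtain ⟨c, c1, c2, c3, c4, c5⟩ := key _ lip2 h6.2.2.1 h5
    refine ⟨c, d, c1, c4, Or.inr (Or.inr (Or.inl ⟨⟨by omega, by omega⟩, ?_, c5.mono ?_⟩))⟩
    · simp only [nm, mem_Rc] at *; omega
    · rintro v ⟨v1, v2, v3⟩; refine ⟨v1, ?_⟩; simp only [nm, mem_Rc] at *; omega
  · obtain ⟨c, c1, c2, c3, c4, c5⟩ := key _ lip4 h6.2.2.2 h5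
    refine ⟨c, d, c1, c4, Or.inr (Or.inr (Or.inr ⟨⟨by omega, by omega⟩, ?_, c5.mono ?_⟩))⟩
    · simp only [nm, mem_Rc] at *; omega
    · rintro v ⟨v1, v2, v3⟩; refine ⟨v1, ?_⟩; simp only [nm, mem_Rc] at *; omega


def ev (R A B : Set V) : Set Om := {ω | ∃ a ∈ R, ∃ b ∈ R, a ∈ A ∧ b ∈ B ∧ cn ω R a b}

noncomputable def eds {R : Set V} (hR : R.Finite) : Finset E := hR.toFinset ×ˢ Finset.univ

lemma mem_eds {R : Set V} {hR : R.Finite} {e : E} : e ∈ eds hR ↔ e.1 ∈ R := by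
  simp [eds]

lemma st.mono {ω ω' : Om} (h : ∀ e, ω e = true → ω' e = true) {u v : V} (hs : st ω u v) :
    st ω' u v := by
  obtain ⟨e, h1, h2⟩ := hs; exact ⟨e, h e h1, h2⟩

lemma cn.cong {ω ω' : Om} {R : Set V}
    (h : ∀ e : E, e.1 ∈ R → tgt e ∈ R → ω e = true → ω' e = true) {a b : V}
    (hs : cn ω R a b) : cn ω' R a b := by
  refine Relation.ReflTransGen.mono (fun u v h' => ⟨?_, h'.2.1, h'.2.2⟩) _ _ hs
  obtain ⟨⟨e, h1, h2⟩, h3, h4⟩ := h'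
  refine ⟨e, h e ?_ ?_ h1, h2⟩
  · rcases h2 with ⟨rfl, rfl⟩ | ⟨rfl, rfl⟩ <;> assumption
  · rcases h2 with ⟨rfl, rfl⟩ | ⟨rfl, rfl⟩ <;> assumption

lemma ev_incr (R A B : Set V) : Incr (ev R A B) := by
  rintro ω ω' h ⟨a, ha, b, hb, h1, h2, h3⟩
  exact ⟨a, ha, b, hb, h1, h2, h3.cong fun e _ _ => h e⟩

lemma ev_dep {R : Set V} (hR : R.Finite) (A B : Set V) : Dep (eds hR) (ev R A B) := by
  rintro ω ω' h ⟨a, ha, b, hb, h1, h2, h3⟩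
  exact ⟨a, ha, b, hb, h1, h2, h3.cong fun e h4 _ h5 => by rw [← h e (mem_eds.2 h4)]; exact h5⟩

def Ok (A : Set Om) : Prop := Incr A ∧ ∃ F, Dep F A

lemma ev_ok {R : Set V} (hR : R.Finite) (A B : Set V) : Ok (ev R A B) :=
  ⟨ev_incr R A B, _, ev_dep hR A B⟩

lemma Ok.inter {A B : Set Om} (h : Ok A) (h' : Ok B) : Ok (A ∩ B) := by
  classical
  obtain ⟨h1, F, h2⟩ := h
  obtain ⟨h3, G, h4⟩ := h'
  exact ⟨fun ω ω' H hA => ⟨h1 ω ω' H hA.1, h3 ω ω' H hA.2⟩, F ∪ G,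
    (h2.mono Finset.subset_union_left).inter (h4.mono Finset.subset_union_right)⟩

lemma hk {p : ℝ} {m : Measure Om} (hm : Bern p m) (h0 : 0 ≤ p) (h1 : p ≤ 1) {A B : Set Om}
    (h : Ok A) (h' : Ok B) {a b : ℝ} (ha : a ≤ m.real A) (hb : b ≤ m.real B) (b0 : 0 ≤ b) :
    a * b ≤ m.real (A ∩ B) := by
  classical
  obtain ⟨h1, F, h2⟩ := h
  obtain ⟨h3, G, h4⟩ := h'
  exact (mul_le_mul ha hb b0 measureReal_nonneg).trans
    (hm.harris h0 (by assumption) (h2.mono Finset.subset_union_left) (h4.mono Finset.subset_union_right) h1 h3)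

/-- `τ` is induced by a bijection of edges -/
def Au (τ : V → V) : Prop := ∃ σ : E ≃ E, ∀ e : E,
  (τ e.1 = (σ e).1 ∧ τ (tgt e) = tgt (σ e)) ∨ (τ e.1 = tgt (σ e) ∧ τ (tgt e) = (σ e).1)

lemma Au.comp {τ ρ : V → V} (h : Au τ) (h' : Au ρ) : Au (τ ∘ ρ) := by
  obtain ⟨σ, hσ⟩ := h
  obtain ⟨π, hπ⟩ := h'
  refine ⟨π.trans σ, fun e => ?_⟩
  simp only [Function.comp, Equiv.trans_apply]
  rcases hπ e with ⟨h1, h2⟩ | ⟨h1, h2⟩ <;> rw [h1, h2]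
  · exact hσ (π e)
  · rcases hσ (π e) with h | h
    · exact Or.inr h.symm
    · exact Or.inl h.symm

lemma Au.trans (a b : ℤ) : Au fun v => (v.1 + a, v.2 + b) := by
  refine ⟨⟨fun e => ((e.1.1 + a, e.1.2 + b), e.2), fun e => ((e.1.1 - a, e.1.2 - b), e.2), fun e => by simp, fun e => by simp⟩, fun e => ?_⟩
  obtain ⟨⟨x, y⟩, b⟩ := e
  cases b <;> simp [tgt] <;> omega

lemma Au.refl (c : ℤ) : Au fun v => (c - v.1, v.2) := by
  refine ⟨⟨fun e => if e.2 then ((c - e.1.1, e.1.2), e.2) else ((c - e.1.1 - 1, e.1.2), e.2),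
    fun e => if e.2 then ((c - e.1.1, e.1.2), e.2) else ((c - e.1.1 - 1, e.1.2), e.2),
    ?_, ?_⟩, ?_⟩
  all_goals
    rintro ⟨⟨x, y⟩, b⟩
    cases b <;> simp [tgt]
  all_goals omega

lemma Au.swap : Au fun v => (v.2, v.1) := by
  refine ⟨⟨fun e => ((e.1.2, e.1.1), !e.2), fun e => ((e.1.2, e.1.1), !e.2), fun e => by simp, fun e => by simp⟩, ?_⟩
  rintro ⟨⟨x, y⟩, b⟩
  cases b <;> simp [tgt]

lemma Au.cn {τ : V → V} {σ : E ≃ E} (hσ : ∀ e : E,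
    (τ e.1 = (σ e).1 ∧ τ (tgt e) = tgt (σ e)) ∨ (τ e.1 = tgt (σ e) ∧ τ (tgt e) = (σ e).1))
    {ω : Om} {R R' : Set V} (hR : ∀ v ∈ R, τ v ∈ R') {a b : V}
    (h : cn (fun e => ω (σ e)) R a b) : cn ω R' (τ a) (τ b) := by
  induction h with
  | refl => exact .refl
  | tail _ h2 ih =>
    refine .tail ih ⟨?_, hR _ h2.2.1, hR _ h2.2.2⟩
    obtain ⟨⟨e, h3, h4⟩, -⟩ := h2
    refine ⟨σ e, h3, ?_⟩
    have := hσ e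
    rcases h4 with ⟨rfl, rfl⟩ | ⟨rfl, rfl⟩ <;> rcases this with ⟨h5, h6⟩ | ⟨h5, h6⟩ <;> simp [h5, h6]

lemma real_comp {κ : Type*} {m : Measure Om} {f : Om → κ → Bool} (hf : Measurable f)
    {F : Finset κ} {X : Set (κ → Bool)} (hX : Dep F X) : m.real {ω | f ω ∈ X} = (m.map f).real X := by
  rw [measureReal_def, measureReal_def, Measure.map_apply hf hX.meas]
  rfl

lemma Au.le {τ : V → V} (h : Au τ) {p : ℝ} {m : Measure Om} (hm : Bern p m) (h0 : 0 ≤ p)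
    (h1 : p ≤ 1) {R A B R' A' B' : Set V} (hR : R.Finite) (h2 : ∀ v ∈ R, τ v ∈ R')
    (h3 : ∀ v ∈ R, v ∈ A → τ v ∈ A') (h4 : ∀ v ∈ R, v ∈ B → τ v ∈ B') :
    m.real (ev R A B) ≤ m.real (ev R' A' B') := by
  obtain ⟨σ, hσ⟩ := h
  have := hm.1
  have hf : Measurable fun (ω : Om) (e : E) => ω (σ e) :=
    measurable_pi_lambda _ fun e => measurable_pi_apply _
  rw [hm.eq (hm.map σ) h0 h1 (ev_dep hR A B), ← real_comp hf (ev_dep hR A B)]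
  refine measureReal_mono ?_
  rintro ω ⟨a, ha, b, hb, h5, h6, h7⟩
  exact ⟨τ a, h2 a ha, τ b, h2 b hb, h3 a ha h5, h4 b hb h6, Au.cn hσ h2 h7⟩

lemma ev_mono {R A B R' A' B' : Set V} (h1 : R ⊆ R') (h2 : ∀ v ∈ R, v ∈ A → v ∈ A')
    (h3 : ∀ v ∈ R, v ∈ B → v ∈ B') : ev R A B ⊆ ev R' A' B' := by
  rintro ω ⟨a, ha, b, hb, h5, h6, h7⟩
  exact ⟨a, h1 ha, b, h1 hb, h2 a ha h5, h3 b hb h6, h7.mono h1⟩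

lemma ev_symm {R A B : Set V} : ev R A B ⊆ ev R B A := by
  rintro ω ⟨a, ha, b, hb, h5, h6, h7⟩
  exact ⟨b, hb, a, ha, h6, h5, h7.symm⟩

/-- duality: the face with lower left corner `(x,y)` is called `(x,y)`;
`star` maps a dual edge to the primal edge it crosses -/
def star : E ≃ E where
  toFun e := if e.2 then ((e.1.1, e.1.2 + 1), false) else ((e.1.1 + 1, e.1.2), true)
  invFun e := if e.2 then ((e.1.1 - 1, e.1.2), false) else ((e.1.1, e.1.2 - 1), true)
  left_inv := by rintro ⟨⟨x, y⟩, b⟩; cases b <;> simp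
  right_inv := by rintro ⟨⟨x, y⟩, b⟩; cases b <;> simp

def du (ω : Om) : Om := fun e => !(ω (star e))

lemma du_real {m : Measure Om} (hm : Bern (1/2) m) {F : Finset E} {X : Set Om} (hX : Dep F X) :
    m.real {ω | du ω ∈ X} = m.real X := by
  have hf : Measurable du := measurable_pi_lambda _ fun e =>
    (measurable_of_countable not).comp (measurable_pi_apply _)
  rw [real_comp hf hX]
  have hf1 : Measurable fun (ω : Om) (e : E) => ω (star e) :=
    measurable_pi_lambda _ fun e => measurable_pi_apply _
  have hf2 : Measurable fun (ω : Om) (e : E) => !(ω e) := measurable_pi_lambda _ fun e =>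
    (measurable_of_countable not).comp (measurable_pi_apply _)
  have := (hm.map star).flip
  rw [Measure.map_map hf2 hf1] at this
  exact this.eq hm (by norm_num) (by norm_num) hX

def dbl (v : V) : V := (2 * v.1, 2 * v.2)
def mid (e : E) : V := if e.2 then (2 * e.1.1, 2 * e.1.2 + 1) else (2 * e.1.1 + 1, 2 * e.1.2)

/-- doubled primal cluster -/
def clP (ω : Om) (R : Set V) : Set V :=
  {w | (∃ v ∈ R, w = dbl v) ∨ ∃ e : E, ω e = true ∧ e.1 ∈ R ∧ tgt e ∈ R ∧ w = mid e}

lemma clP_bd {ω : Om} {R : Set V} {w : V} (h : w ∈ clP ω R) : ∃ u ∈ R, ∃ v ∈ R,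
    2 * u.1 ≤ w.1 ∧ w.1 ≤ 2 * v.1 ∧ 2 * u.2 ≤ w.2 ∧ w.2 ≤ 2 * v.2 := by
  rcases h with ⟨v, hv, rfl⟩ | ⟨e, -, h1, h2, rfl⟩
  · exact ⟨v, hv, v, hv, by simp [dbl]⟩
  · refine ⟨_, h1, _, h2, ?_⟩
    obtain ⟨⟨x, y⟩, b⟩ := e
    cases b <;> simp [mid, tgt] <;> omega

lemma cn.dbl {ω : Om} {R : Set V} {a b : V} (h : cn ω R a b) :
    Perc.pth (clP ω R) (Perc.dbl a) (Perc.dbl b) := by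
  induction h with
  | refl => exact .refl
  | tail _ h2 ih =>
    refine ih.trans ?_
    obtain ⟨⟨e, h3, h4⟩, h5, h6⟩ := h2
    have key : e.1 ∈ R → tgt e ∈ R → Perc.pth (clP ω R) (Perc.dbl e.1) (Perc.dbl (tgt e)) := by
      intro h7 h8
      refine (Perc.pth.one (b := mid e) ?_ ?_ ?_).trans (Perc.pth.one ?_ ?_ ?_)
      · obtain ⟨⟨x, y⟩, b⟩ := e
        cases b <;> simp [mid, Perc.dbl, nb]
      · exact Or.inl ⟨_, h7, rfl⟩
      · exact Or.inr ⟨e, h3, h7, h8, rfl⟩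
      · obtain ⟨⟨x, y⟩, b⟩ := e
        cases b <;> simp [mid, Perc.dbl, nb, tgt] <;> omega
      · exact Or.inr ⟨e, h3, h7, h8, rfl⟩
      · exact Or.inl ⟨_, h8, rfl⟩
    rcases h4 with ⟨rfl, rfl⟩ | ⟨rfl, rfl⟩
    · exact key h5 h6
    · exact (key h6 h5).symm

def shf (v : V) : V := (v.1 + 1, v.2 + 1)

lemma P_disj (ω : Om) (R R' : Set V) : Disjoint (clP ω R) (shf '' clP (du ω) R') := by
  rw [Set.disjoint_left]
  rintro w hw ⟨w', hw', hh⟩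
  simp only [Prod.ext_iff, shf] at hh
  rcases hw with ⟨v, hv, rfl⟩ | ⟨e, h0, h1, h2, rfl⟩ <;>
  rcases hw' with ⟨v', hv', rfl⟩ | ⟨e', h0', h1', h2', rfl⟩
  · simp only [dbl] at hh; omega
  · obtain ⟨⟨x, y⟩, b⟩ := e'
    cases b <;> simp [mid, dbl] at hh <;> omega
  · obtain ⟨⟨x, y⟩, b⟩ := e
    cases b <;> simp [mid, dbl] at hh <;> omega
  · have : e = star e' := by
      obtain ⟨⟨x, y⟩, b⟩ := e
      obtain ⟨⟨x', y'⟩, b'⟩ := e'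
      cases b <;> cases b' <;> simp [mid, star] at hh ⊢ <;> omega
    simp [du, ← this, h0] at h0'

lemma cn.shf {ω : Om} {R : Set V} {a b : V} (h : cn ω R a b) :
    Perc.pth (Perc.shf '' clP ω R) (Perc.shf (Perc.dbl a)) (Perc.shf (Perc.dbl b)) :=
  Perc.pth.map (τ := Perc.shf) (fun u v h => by unfold nb at *; simp only [Perc.shf]; omega)
    (fun u hu => Set.mem_image_of_mem _ hu) h.dbl

lemma BH {ω : Om} {R R' : Set V} {a b c d : V} (h : cn ω R a b) (h' : cn (du ω) R' c d)
    (ha : a ∈ R) (hc : c ∈ R') (h1 : ∀ v ∈ R, c.2 < v.2 ∧ v.2 ≤ d.2)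
    (h2 : ∀ v ∈ R', a.1 ≤ v.1 ∧ v.1 < b.1) : False := by
  refine T1 (P_disj ω R R').symm h'.shf h.dbl ⟨_, Or.inl ⟨d, h'.mem hc, rfl⟩, rfl⟩
    (Or.inl ⟨a, ha, rfl⟩) ?_ ?_
  · rintro _ ⟨w, hw, rfl⟩
    obtain ⟨u, hu, v, hv, h3⟩ := clP_bd hw
    have := h2 u hu
    have := h2 v hv
    simp only [shf, dbl]; omega
  · rintro w hw
    obtain ⟨u, hu, v, hv, h3⟩ := clP_bd hw
    have := h1 u hu
    have := h1 v hv
    simp only [shf, dbl]; omega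

lemma BV {ω : Om} {R R' : Set V} {a b c d : V} (h : cn ω R a b) (h' : cn (du ω) R' c d)
    (ha : a ∈ R) (hc : c ∈ R') (h1 : ∀ v ∈ R, c.1 < v.1 ∧ v.1 ≤ d.1)
    (h2 : ∀ v ∈ R', a.2 ≤ v.2 ∧ v.2 < b.2) : False := by
  refine T1 (P_disj ω R R') h.dbl h'.shf (Or.inl ⟨b, h.mem ha, rfl⟩)
    ⟨_, Or.inl ⟨c, hc, rfl⟩, rfl⟩ ?_ ?_
  · rintro w hw
    obtain ⟨u, hu, v, hv, h3⟩ := clP_bd hw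
    have := h1 u hu
    have := h1 v hv
    simp only [shf, dbl]; omega
  · rintro _ ⟨w, hw, rfl⟩
    obtain ⟨u, hu, v, hv, h3⟩ := clP_bd hw
    have := h2 u hu
    have := h2 v hv
    simp only [shf, dbl]; omega


lemma two0 : (2 : ZMod 2) = 0 := rfl

lemma tel (h : ℤ → ZMod 2) (n : ℕ) : ∑ x ∈ Finset.range n, (h x + h (x + 1)) = h 0 + h n := by
  induction n with
  | zero => simp [CharTwo.add_self_eq_zero]
  | succ k ih =>
    rw [Finset.sum_range_succ, ih]; push_cast
    linear_combination h k * two0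

lemma sumby {f g : ℤ → ℤ → ZMod 2} {n : ℕ} (hn : 1 ≤ n)
    (hf0 : ∀ y : ℤ, 0 ≤ y → y ≤ n - 1 → f 0 y = 1) (hfn : ∀ y : ℤ, 0 ≤ y → y ≤ n - 1 → f n y = 0)
    (hg0 : ∀ x : ℤ, 0 ≤ x → x ≤ n - 1 → g x (-1) = 1)
    (hgn : ∀ x : ℤ, 0 ≤ x → x ≤ n - 1 → g x (n - 1) = 0)
    (hh : ∀ x y : ℤ, 0 ≤ x → x ≤ n - 1 → -1 ≤ y → y + 1 ≤ n - 1 →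
      f x (y + 1) = f (x + 1) (y + 1) ∨ g x y = g x (y + 1))
    (hv : ∀ x y : ℤ, 0 ≤ x → x + 1 ≤ n - 1 → 0 ≤ y → y + 1 ≤ n - 1 →
      f (x + 1) y = f (x + 1) (y + 1) ∨ g x y = g (x + 1) y) : False := by
  have h2 : ∀ a : ZMod 2, a + a = 0 := CharTwo.add_self_eq_zero
  have hh' : ∀ x y : ℤ, 0 ≤ x → x ≤ n - 1 → -1 ≤ y → y + 1 ≤ n - 1 →
      (f x (y + 1) + f (x + 1) (y + 1)) * g x (y + 1) = (f x (y + 1) + f (x + 1) (y + 1)) * g x y := by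
    intro x y a b c d
    rcases hh x y a b c d with h | h
    · simp [h, h2]
    · rw [h]
  have key : ∀ k : ℕ, k + 1 ≤ n →
      ∑ x ∈ Finset.range n, (f x k + f (x + 1) k) * g x k = 1 := by
    intro k
    induction k with
    | zero =>
      intro _
      have : ∀ x ∈ Finset.range n, (f x (0 : ℕ) + f (x + 1) (0 : ℕ)) * g x (0 : ℕ) =
          f x 0 + f (x + 1) 0 := by
        intro x hx
        have hx := Finset.mem_range.1 hx
        have := hh' x (-1) (by omega) (by omega) (by omega) (by omega)
        simp only [Int.reduceNeg, neg_add_cancel] at this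
        simp only [Nat.cast_zero]
        rw [this, hg0 x (by omega) (by omega), mul_one]
      rw [Finset.sum_congr rfl this, tel (fun x => f x 0), hf0 0 le_rfl (by omega), hfn 0 le_rfl (by omega), add_zero]
    | succ k ih =>
      intro hk
      rw [← ih (by omega)]
      have e1 : ∀ x ∈ Finset.range n, (f x (k + 1 : ℕ) + f (x + 1) (k + 1 : ℕ)) * g x (k + 1 : ℕ) =
          (f x (k + 1) + f (x + 1) (k + 1)) * g x k := by
        intro x hx
        have hx := Finset.mem_range.1 hx
        push_cast
        exact hh' x k (by omega) (by omega) (by omega) (by omega)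
      rw [Finset.sum_congr rfl e1, ← sub_eq_zero, ← Finset.sum_sub_distrib]
      have e2 : ∀ x ∈ Finset.range n, (f x (k + 1) + f (x + 1) (k + 1)) * g x k -
          (f x k + f (x + 1) k) * g x k =
          (fun x : ℤ => (f x k + f x (k + 1)) * g x k) x +
          (fun x : ℤ => (f x k + f x (k + 1)) * g x k) (x + 1) := by
        intro x hx
        have hx := Finset.mem_range.1 hx
        have e3 : (f (x + 1) k + f (x + 1) (k + 1)) * g (x + 1) k = (f (x + 1) k + f (x + 1) (k + 1)) * g x k := by
          by_cases hxn : x + 1 = n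
          · have : (x : ℤ) + 1 = n := by omega
            rw [this, hfn k (by omega) (by omega), hfn (k + 1) (by omega) (by omega)]; simp
          · rcases hv x k (by omega) (by omega) (by omega) (by omega) with h | h
            · simp [h, h2]
            · rw [h]
        simp only [e3]
        linear_combination (-(f x k + f (x + 1) k) * g x k) * two0
      rw [Finset.sum_congr rfl e2, tel (fun x : ℤ => (f x k + f x (k + 1)) * g x k)]
      rw [hf0 k (by omega) (by omega), hf0 (k + 1) (by omega) (by omega), hfn k (by omega) (by omega), hfn (k + 1) (by omega) (by omega)]
      simp [h2]
  have := key (n - 1) (by omega)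
  rw [Finset.sum_eq_zero] at this
  · exact absurd this (by decide)
  · intro x hx
    have hx := Finset.mem_range.1 hx
    rw [show ((n - 1 : ℕ) : ℤ) = n - 1 by omega, hgn x (by omega) (by omega), mul_zero]

open Classical in
lemma dual_ex {n : ℕ} (hn : 1 ≤ n) (ω : Om) :
    ω ∈ ev (Rc 0 n 0 (n - 1)) {v | v.1 = 0} {v | v.1 = n} ∨
    du ω ∈ ev (Rc 0 (n - 1) (-1) (n - 1)) {v | v.2 = -1} {v | v.2 = n - 1} := by
  by_contra hcon
  push Not at hcon
  obtain ⟨c1, c2⟩ := hcon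
  set R := Rc 0 n 0 (n - 1)
  set R' := Rc 0 (n - 1) (-1) (n - 1)
  refine sumby (f := fun x y => ind (∃ a ∈ R, a.1 = 0 ∧ cn ω R a (x, y)))
    (g := fun x y => ind (∃ a ∈ R', a.2 = -1 ∧ cn (du ω) R' a (x, y))) hn ?_ ?_ ?_ ?_ ?_ ?_
  · intro y h1 h2
    exact if_pos ⟨(0, y), ⟨le_rfl, by simp, h1, h2⟩, rfl, .refl⟩
  · intro y h1 h2
    refine if_neg ?_
    rintro ⟨a, h3, h4, h5⟩
    exact c1 ⟨a, h3, _, h5.mem h3, h4, rfl, h5⟩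
  · intro x h1 h2
    exact if_pos ⟨(x, -1), ⟨h1, h2, le_rfl, by simp; omega⟩, rfl, .refl⟩
  · intro y h1 h2
    refine if_neg ?_
    rintro ⟨a, h3, h4, h5⟩
    exact c2 ⟨a, h3, _, h5.mem h3, h4, rfl, h5⟩
  · intro x y h1 h2 h3 h4
    by_cases ho : ω ((x, y + 1), false) = true
    · left
      have hs : st ω (x, y + 1) (x + 1, y + 1) := ⟨_, ho, Or.inl ⟨rfl, by simp [tgt]⟩⟩
      have m1 : (x, y + 1) ∈ R := ⟨by simp only; omega, by simp only; omega, by simp only; omega, by simp only; omega⟩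
      have m2 : (x + 1, y + 1) ∈ R := ⟨by simp only; omega, by simp only; omega, by simp only; omega, by simp only; omega⟩
      unfold ind
      congr 1
      refine propext ⟨?_, ?_⟩
      · rintro ⟨a, a1, a2, a3⟩; exact ⟨a, a1, a2, .tail a3 ⟨hs, m1, m2⟩⟩
      · rintro ⟨a, a1, a2, a3⟩; exact ⟨a, a1, a2, .tail a3 ⟨hs.symm, m2, m1⟩⟩
    · right
      have hs : st (du ω) (x, y) (x, y + 1) := ⟨((x, y), true), by simpa [du, star] using ho, Or.inl ⟨rfl, by simp [tgt]⟩⟩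
      have m1 : (x, y) ∈ R' := ⟨by simp only; omega, by simp only; omega, by simp only; omega, by simp only; omega⟩
      have m2 : (x, y + 1) ∈ R' := ⟨by simp only; omega, by simp only; omega, by simp only; omega, by simp only; omega⟩
      unfold ind
      congr 1
      refine propext ⟨?_, ?_⟩
      · rintro ⟨a, a1, a2, a3⟩; exact ⟨a, a1, a2, .tail a3 ⟨hs, m1, m2⟩⟩
      · rintro ⟨a, a1, a2, a3⟩; exact ⟨a, a1, a2, .tail a3 ⟨hs.symm, m2, m1⟩⟩
  · intro x y h1 h2 h3 h4
    by_cases ho : ω ((x + 1, y), true) = true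
    · left
      have hs : st ω (x + 1, y) (x + 1, y + 1) := ⟨_, ho, Or.inl ⟨rfl, by simp [tgt]⟩⟩
      have m1 : (x + 1, y) ∈ R := ⟨by simp only; omega, by simp only; omega, by simp only; omega, by simp only; omega⟩
      have m2 : (x + 1, y + 1) ∈ R := ⟨by simp only; omega, by simp only; omega, by simp only; omega, by simp only; omega⟩
      unfold ind
      congr 1
      refine propext ⟨?_, ?_⟩
      · rintro ⟨a, a1, a2, a3⟩; exact ⟨a, a1, a2, .tail a3 ⟨hs, m1, m2⟩⟩
      · rintro ⟨a, a1, a2, a3⟩; exact ⟨a, a1, a2, .tail a3 ⟨hs.symm, m2, m1⟩⟩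
    · right
      have hs : st (du ω) (x, y) (x + 1, y) := ⟨((x, y), false), by simpa [du, star] using ho, Or.inl ⟨rfl, by simp [tgt]⟩⟩
      have m1 : (x, y) ∈ R' := ⟨by simp only; omega, by simp only; omega, by simp only; omega, by simp only; omega⟩
      have m2 : (x + 1, y) ∈ R' := ⟨by simp only; omega, by simp only; omega, by simp only; omega, by simp only; omega⟩
      unfold ind
      congr 1
      refine propext ⟨?_, ?_⟩
      · rintro ⟨a, a1, a2, a3⟩; exact ⟨a, a1, a2, .tail a3 ⟨hs, m1, m2⟩⟩
      · rintro ⟨a, a1, a2, a3⟩; exact ⟨a, a1, a2, .tail a3 ⟨hs.symm, m2, m1⟩⟩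

/-- horizontal crossing probability of `[0,W] × [0,H]` -/
noncomputable def q (m : Measure Om) (W H : ℤ) : ℝ :=
  m.real (ev (Rc 0 W 0 H) {v | v.1 = 0} {v | v.1 = W})

lemma half_le {m : Measure Om} (hm : Bern (1/2) m) {n : ℕ} (hn : 1 ≤ n) : 1/2 ≤ q m n (n - 1) := by
  have := hm.1
  have h1 := du_real hm (ev_dep (Rc_fin 0 (n - 1) (-1) (n - 1)) {v | v.2 = -1} {v | v.2 = (n:ℤ) - 1})
  have h2 : m.real (ev (Rc 0 (n - 1) (-1) (n - 1)) {v | v.2 = -1} {v | v.2 = (n:ℤ) - 1}) ≤ q m n (n - 1) := by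
    refine ((Au.trans 1 0).comp Au.swap).le hm (by norm_num) (by norm_num) (Rc_fin _ _ _ _) ?_ ?_ ?_
    · rintro v ⟨h1, h2, h3, h4⟩; simp only [Function.comp, mem_Rc]; omega
    · rintro v _ h; simp only [Function.comp, Set.mem_ofPred_eq] at *; omega
    · rintro v _ h; simp only [Function.comp, Set.mem_ofPred_eq] at *; omega
  have h3 : (1 : ℝ) ≤ q m n (n - 1) + m.real {ω | du ω ∈ ev (Rc 0 (n - 1) (-1) (n - 1)) {v | v.2 = -1} {v | v.2 = (n:ℤ) - 1}} := by
    rw [← probReal_univ (μ := m)]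
    refine le_trans (measureReal_mono ?_) (measureReal_union_le _ _)
    exact fun ω _ => dual_ex hn ω
  linarith

noncomputable def th (m : Measure Om) (n : ℕ) : ℝ := m.real (ev {v | nm v ≤ n} {0} {v | nm v = n})

lemma nm_fin (n : ℤ) : {v : V | nm v ≤ n}.Finite := by
  refine (Rc_fin (-n) n (-n) n).subset fun v hv => ?_
  simp only [Set.mem_ofPred_eq, nm] at hv
  simp only [mem_Rc]; omega

lemma th_ge {m : Measure Om} (hm : Bern (1/2) m) {n : ℕ} (hn : 1 ≤ n) : 1/2 ≤ n * th m n := by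
  have := hm.1
  refine (half_le hm hn).trans ?_
  have h1 : ev (Rc 0 n 0 (n - 1)) {v | v.1 = 0} {v | v.1 = (n:ℤ)} ⊆
      ⋃ y ∈ Finset.range n, ev (Rc 0 n 0 (n - 1)) {v | v = (0, (y : ℤ))} {v | v.1 = (n:ℤ)} := by
    rintro ω ⟨a, ha, b, hb, h1, h2, h3⟩
    simp only [Set.mem_iUnion]
    obtain ⟨a1, a2, a3, a4⟩ := ha
    refine ⟨a.2.toNat, Finset.mem_range.2 (by omega), a, ⟨a1, a2, a3, a4⟩, b, hb, Prod.ext h1 ?_, h2, h3⟩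
    simp only; omega
  have h2 : ∀ y ∈ Finset.range n, m.real (ev (Rc 0 n 0 (n - 1)) {v | v = (0, (y : ℤ))} {v | v.1 = (n:ℤ)}) ≤ th m n := by
    intro y hy
    have hy := Finset.mem_range.1 hy
    refine ((Au.trans 0 (-y)).le hm (by norm_num) (by norm_num) (Rc_fin _ _ _ _) (R' := Rc 0 n (-n) n) (A' := {0}) (B' := {v | v.1 = n}) ?_ ?_ ?_).trans (measureReal_mono ?_)
    · rintro v ⟨h1, h2, h3, h4⟩; simp only [mem_Rc]; omega
    · rintro v _ rfl; simp
    · rintro v _ h; simp only [Set.mem_ofPred_eq] at *; omega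
    · refine ev_mono ?_ ?_ ?_
      · rintro v ⟨h1, h2, h3, h4⟩; simp only [Set.mem_ofPred_eq, nm]; omega
      · exact fun v _ h => h
      · rintro v ⟨h1, h2, h3, h4⟩ h; simp only [Set.mem_ofPred_eq, nm] at *; omega
  refine (measureReal_mono h1 (measure_ne_top _ _)).trans ((measureReal_biUnion_finset_le _ _).trans ((Finset.sum_le_sum h2).trans ?_))
  simp


def src (o : E × Bool) : V := if o.2 then tgt o.1 else o.1.1
def dst (o : E × Bool) : V := if o.2 then o.1.1 else tgt o.1

lemma st_or {ω : Om} {u v : V} (h : st ω u v) : ∃ o : E × Bool, ω o.1 = true ∧ u = src o ∧ v = dst o := by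
  obtain ⟨e, h1, ⟨h2, h3⟩ | ⟨h2, h3⟩⟩ := h
  · exact ⟨(e, false), h1, h2, h3⟩
  · exact ⟨(e, true), h1, h3, h2⟩

lemma or_st {ω : Om} {o : E × Bool} (h : ω o.1 = true) : st ω (src o) (dst o) := by
  obtain ⟨e, b⟩ := o
  cases b
  · exact ⟨e, h, Or.inl ⟨rfl, rfl⟩⟩
  · exact ⟨e, h, Or.inr ⟨rfl, rfl⟩⟩

lemma or_nb (o : E × Bool) : nb (src o) (dst o) := (or_st (ω := fun _ => true) rfl).nb

lemma or_or (o : E × Bool) : (src o = o.1.1 ∧ dst o = tgt o.1) ∨ (src o = tgt o.1 ∧ dst o = o.1.1) := by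
  obtain ⟨e, b⟩ := o
  cases b
  · exact Or.inl ⟨rfl, rfl⟩
  · exact Or.inr ⟨rfl, rfl⟩

lemma cn.exit {ω : Om} {R C : Set V} {a b : V} (h : cn ω R a b) (ha : a ∈ C) (hb : b ∉ C) :
    ∃ u ∈ C, ∃ v, v ∉ C ∧ u ∈ R ∧ v ∈ R ∧ st ω u v ∧ cn ω (R \ C) v b := by
  induction h with
  | refl => exact absurd ha hb
  | @tail p q h3 h4 ih =>
    by_cases hp : p ∈ C
    · exact ⟨p, hp, q, hb, h4.2.1, h4.2.2, h4.1, .refl⟩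
    · obtain ⟨u, hu, v, h5, h6, h7, h8, h9⟩ := ih hp
      exact ⟨u, hu, v, h5, h6, h7, h8, .tail h9 ⟨h4.1, ⟨h4.2.1, hp⟩, ⟨h4.2.2, hb⟩⟩⟩

lemma ev_dep' {R : Set V} {F : Finset E} (hF : ∀ e : E, e.1 ∈ R → tgt e ∈ R → e ∈ F) (A B : Set V) :
    Dep F (ev R A B) := by
  rintro ω ω' h ⟨a, ha, b, hb, h1, h2, h3⟩
  exact ⟨a, ha, b, hb, h1, h2, h3.cong fun e h4 h6 h5 => by rw [← h e (hF e h4 h6)]; exact h5⟩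

lemma cl_dep {S C : Set V} (h0 : (0 : V) ∈ S) {F : Finset E}
    (hF : ∀ e : E, e.1 ∈ S → tgt e ∈ S → (e.1 ∈ C ∨ tgt e ∈ C) → e ∈ F) :
    Dep F {ω : Om | cl ω S 0 = C} := by
  intro ω ω' H hC
  have hC : cl ω S 0 = C := hC
  have hst : ∀ u v, u ∈ S → v ∈ S → u ∈ C → (st ω u v ↔ st ω' u v) := by
    intro u v hu hv huC
    constructor
    all_goals
      rintro ⟨e, h1, h2⟩
      have : e ∈ F := by
        rcases h2 with ⟨rfl, rfl⟩ | ⟨rfl, rfl⟩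
        · exact hF _ hu hv (Or.inl huC)
        · exact hF _ hv hu (Or.inr huC)
      have := H e this
      exact ⟨e, by simp_all, h2⟩
  change cl ω' S 0 = C
  have z : ∀ v, cn ω' S 0 v → v ∈ C := by
    intro v h
    induction h with
    | refl => rw [← hC]; exact .refl
    | tail _ h4 ih =>
      rw [← hC] at ih ⊢
      exact .tail ih ⟨(hst _ _ h4.2.1 h4.2.2 (hC ▸ ih)).2 h4.1, h4.2⟩
  have z' : ∀ v, cn ω S 0 v → cn ω' S 0 v := by
    intro v h
    induction h with
    | refl => exact .refl
    | tail h3 h4 ih =>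
      exact .tail ih ⟨(hst _ _ h4.2.1 h4.2.2 (hC ▸ h3)).1 h4.1, h4.2⟩
  ext v
  refine ⟨z v, fun h => z' v ?_⟩
  rw [← hC] at h; exact h

lemma prob_edge {p : ℝ} {m : Measure Om} (hm : Bern p m) (h0 : 0 ≤ p) (e : E) :
    m.real {ω | ω e = true} = p := by
  have := hm.2 {e} (fun _ => true)
  simp at this
  rw [measureReal_def, this, ENNReal.toReal_ofReal h0]

lemma th_arm {p : ℝ} {m : Measure Om} (hm : Bern p m) (h0 : 0 ≤ p) (h1 : p ≤ 1) {R : Set V}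
    (hR : R.Finite) {y : V} {n L : ℕ} (hy : nm y ≤ L) :
    m.real (ev R {y} {v | nm v = (n + L : ℕ)}) ≤ th m n := by
  have := hm.1
  refine ((Au.trans (-y.1) (-y.2)).le hm h0 h1 hR (R' := (fun v : V => (v.1 + -y.1, v.2 + -y.2)) '' R)
    (A' := {0}) (B' := {v | n ≤ nm v}) (fun v hv => ⟨v, hv, rfl⟩) ?_ ?_).trans (measureReal_mono ?_)
  · rintro v _ rfl; simp
  · rintro v _ h
    simp only [Set.mem_ofPred_eq, nm] at *; push_cast at *; omega
  · rintro ω ⟨a, ha, b, hb, rfl, h3, h4⟩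
    have n0 : nm 0 = 0 := by simp [nm]
    obtain ⟨c, hc, h5, h6⟩ := h4.first lipn ha (t := n) (by rw [n0]; omega) h3
    refine ⟨0, ?_, c, ?_, rfl, h5, h6.mono fun v hv => hv.2⟩
    · change nm 0 ≤ n; rw [n0]; omega
    · exact h5.le

open Classical in
noncomputable def psi (m : Measure Om) (n : ℕ) (S : Set V) : ℝ :=
  ∑ o ∈ (eds (nm_fin n)) ×ˢ (Finset.univ : Finset Bool),
    if src o ∈ S ∧ dst o ∉ S then m.real (ev S {0} {src o}) else 0

lemma mem_O {n : ℕ} {o : E × Bool} (h1 : nm (src o) ≤ n) (h2 : nm (dst o) ≤ n) :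
    o ∈ (eds (nm_fin n)) ×ˢ (Finset.univ : Finset Bool) := by
  rw [Finset.mem_product]
  refine ⟨mem_eds.2 ?_, Finset.mem_univ _⟩
  change nm o.1.1 ≤ n
  rcases or_or o with h | h
  · rw [← h.1]; exact h1
  · rw [← h.2]; exact h2

open Classical in
lemma D1a {m : Measure Om} (hm : Bern (1/2) m) {S : Set V} {L : ℕ} (h0 : (0 : V) ∈ S)
    (hS : ∀ v ∈ S, nm v < L) (n : ℕ) : th m (n + L) ≤ psi m L S * (1/2) * th m n := by
  have := hm.1
  have hSf : S.Finite := (nm_fin L).subset fun v hv => (hS v hv).le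
  set O := (eds (nm_fin L)) ×ˢ (Finset.univ : Finset Bool) with hO
  set Lam : Set V := {v | nm v ≤ (n + L : ℕ)} with hLam
  have hLf : Lam.Finite := nm_fin _
  set P : Finset (Finset V) := hSf.toFinset.powerset
  let X : E × Bool → Finset V → Set Om := fun o C =>
    {ω | cl ω S 0 = (C : Set V)} ∩ ({ω | ω o.1 = true} ∩ ev (Lam \ C) {dst o} {v | nm v = (n + L : ℕ)})
  have cov : ev Lam {0} {v | nm v = (n + L : ℕ)} ⊆
      ⋃ o ∈ O.filter (fun o => src o ∈ S ∧ dst o ∉ S), ⋃ C ∈ P.filter (fun C => src o ∈ C), X o C := by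
    rintro ω ⟨a, ha, b, hb, rfl, h2, h3⟩
    have h2 : nm b = (n + L : ℕ) := h2
    have hsub : cl ω S 0 ⊆ S := cl_sub h0
    have hCf : (cl ω S 0).Finite := hSf.subset hsub
    have hbC : b ∉ cl ω S 0 := fun h => by
      have := hS b (hsub h); omega
    obtain ⟨u, hu, v, hv, h4, h5, h6, h7⟩ := h3.exit (C := cl ω S 0) .refl hbC
    have hvS : v ∉ S := fun h => hv (.tail hu ⟨h6, hsub hu, h⟩)
    obtain ⟨o, o1, rfl, rfl⟩ := st_or h6
    simp only [Set.mem_iUnion]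
    have hsrc := hS _ (hsub hu)
    have hdst : nm (dst o) ≤ L := by have := lipn _ _ (or_nb o); omega
    refine ⟨o, ?_, hCf.toFinset, ?_, ?_, o1, ?_⟩
    · rw [Finset.mem_filter]
      exact ⟨mem_O hsrc.le hdst, hsub hu, hvS⟩
    · rw [Finset.mem_filter, Finset.mem_powerset]
      exact ⟨Set.Finite.toFinset_subset_toFinset.2 hsub, by simpa using hu⟩
    · simp
    · rw [Set.Finite.coe_toFinset]
      exact ⟨dst o, ⟨h5, hv⟩, b, ⟨hb, hbC⟩, rfl, h2, h7⟩
  have bd : ∀ o ∈ O.filter (fun o => src o ∈ S ∧ dst o ∉ S), ∀ C ∈ P.filter (fun C => src o ∈ C),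
      m.real (X o C) ≤ m.real {ω | cl ω S 0 = (C : Set V)} * ((1/2) * th m n) := by
    intro o ho C hC
    rw [Finset.mem_filter] at ho hC
    obtain ⟨ho1, ho2, ho3⟩ := ho
    have hdst : nm (dst o) ≤ L := by have := lipn _ _ (or_nb o); have := hS _ ho2; omega
    set F1 := (eds hSf).filter fun e => tgt e ∈ S ∧ (e.1 ∈ C ∨ tgt e ∈ C)
    set F3 := (eds hLf).filter fun e => e.1 ∉ C ∧ tgt e ∉ C
    have d1 : Dep F1 {ω : Om | cl ω S 0 = (C : Set V)} := cl_dep h0 fun e h1 h2 h3 => by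
      rw [Finset.mem_filter, mem_eds]; exact ⟨h1, h2, h3⟩
    have d2 : Dep {o.1} {ω : Om | ω o.1 = true} := by
      intro ω ω' H h
      change ω' o.1 = true
      rw [← H o.1 (by simp)]; exact h
    have d3 : Dep F3 (ev (Lam \ C) {dst o} {v | nm v = (n + L : ℕ)}) := ev_dep' (fun e h1 h2 => by
      rw [Finset.mem_filter, mem_eds]; exact ⟨h1.1, h1.2, h2.2⟩) _ _
    have x23 : Disjoint {o.1} F3 := by
      rw [Finset.disjoint_singleton_left, Finset.mem_filter]
      rintro ⟨-, h1, h2⟩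
      rcases or_or o with h | h
      · exact h1 (h.1 ▸ hC.2)
      · exact h2 (h.1 ▸ hC.2)
    have x1 : Disjoint F1 ({o.1} ∪ F3) := by
      rw [Finset.disjoint_left]
      intro e he he'
      rw [Finset.mem_filter, mem_eds] at he
      rw [Finset.mem_union, Finset.mem_singleton, Finset.mem_filter] at he'
      rcases he' with rfl | ⟨-, h1, h2⟩
      · rcases or_or o with h | h
        · exact ho3 (h.2 ▸ he.2.1)
        · exact ho3 (h.2 ▸ he.1)
      · exact he.2.2.elim h1 h2
    rw [hm.indep (by norm_num) (by norm_num) x1 d1 ((d2.mono Finset.subset_union_left).inter (d3.mono Finset.subset_union_right)),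
      hm.indep (by norm_num) (by norm_num) x23 d2 d3, prob_edge hm (by norm_num)]
    gcongr
    exact th_arm hm (by norm_num) (by norm_num) (hLf.subset Set.diff_subset) hdst
  have sm : ∀ x ∈ S, ∑ C ∈ P.filter (fun C => x ∈ C), m.real {ω : Om | cl ω S 0 = (C : Set V)} ≤
      m.real (ev S {0} {x}) := by
    intro x hx
    rw [← measureReal_biUnion_finset]
    · refine measureReal_mono ?_
      intro ω hω
      simp only [Set.mem_iUnion, Finset.mem_filter] at hω
      obtain ⟨C, ⟨-, h1⟩, h2⟩ := hω
      have h2 : cl ω S 0 = C := h2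
      refine ⟨0, h0, x, hx, rfl, rfl, ?_⟩
      change x ∈ cl ω S 0
      rw [h2]; exact h1
    · intro C _ C' _ hne
      rw [Function.onFun, Set.disjoint_left]
      intro ω h1 h2
      exact hne (Finset.coe_injective (Eq.trans (Eq.symm h1) h2))
    · intro C _
      exact (cl_dep (F := eds hSf) h0 fun e h1 _ _ => mem_eds.2 h1).meas
  have hth : 0 ≤ th m n := measureReal_nonneg
  calc th m (n + L) ≤ _ := measureReal_mono cov (measure_ne_top _ _)
    _ ≤ ∑ o ∈ O.filter (fun o => src o ∈ S ∧ dst o ∉ S), m.real (⋃ C ∈ P.filter (fun C => src o ∈ C), X o C) :=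
      measureReal_biUnion_finset_le _ _
    _ ≤ ∑ o ∈ O.filter (fun o => src o ∈ S ∧ dst o ∉ S), m.real (ev S {0} {src o}) * ((1/2) * th m n) := by
      refine Finset.sum_le_sum fun o ho => (measureReal_biUnion_finset_le _ _).trans ((Finset.sum_le_sum (bd o ho)).trans ?_)
      rw [← Finset.sum_mul]
      gcongr
      exact sm _ (Finset.mem_filter.1 ho).2.1
    _ = _ := by
      rw [← Finset.sum_mul, Finset.sum_filter, psi]; ring

lemma th_le_one {m : Measure Om} [IsProbabilityMeasure m] (n : ℕ) : th m n ≤ 1 := measureReal_le_one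

lemma D1 {m : Measure Om} (hm : Bern (1/2) m) {S : Set V} {L : ℕ} (h0 : (0 : V) ∈ S)
    (hS : ∀ v ∈ S, nm v < L) : 2 ≤ psi m L S := by
  have := hm.1
  by_contra hlt
  push Not at hlt
  set r := psi m L S * (1/2) with hr
  have hr1 : r < 1 := by linarith
  have hr0 : 0 ≤ r := by
    refine mul_nonneg (Finset.sum_nonneg fun o _ => ?_) (by norm_num)
    split_ifs
    · exact measureReal_nonneg
    · exact le_rfl
  have hL : 1 ≤ L := by have := hS 0 h0; simp [nm] at this; omega
  have key : ∀ k : ℕ, th m (k * L) ≤ r ^ k := by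
    intro k
    induction k with
    | zero => simpa using th_le_one 0
    | succ k ih =>
      rw [add_mul, one_mul]
      refine (D1a hm h0 hS (k * L)).trans ?_
      rw [pow_succ']
      exact mul_le_mul_of_nonneg_left ih hr0
  have lim := (tendsto_self_mul_const_pow_of_lt_one hr0 hr1).mul_const (L : ℝ)
  rw [zero_mul] at lim
  obtain ⟨k, hk1, hk⟩ := ((lim.eventually (gt_mem_nhds (show (0:ℝ) < 1/2 by norm_num))).and (Filter.eventually_ge_atTop 1)).exists
  have h1 := th_ge hm (n := k * L) (Nat.mul_pos hk hL)
  have h2 : ((k * L : ℕ) : ℝ) * th m (k * L) ≤ ((k * L : ℕ) : ℝ) * r ^ k := mul_le_mul_of_nonneg_left (key k) (by positivity)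
  push_cast at h1 h2
  nlinarith


lemma bern_mono {m : ℝ → Measure Om} (hm : ∀ p ∈ Set.Ioo (0:ℝ) 1, Bern p (m p)) {A : Set Om} (hA : Ok A)
    {p r : ℝ} (hp : 0 < p) (hpr : p ≤ r) (hr : r < 1) : (m p).real A ≤ (m r).real A := by
  obtain ⟨iA, F, dA⟩ := hA
  rw [(hm p ⟨hp, by linarith⟩).form hp.le (by linarith) dA, (hm r ⟨by linarith, hr⟩).form (by linarith) hr.le dA]
  have der : ∀ x ∈ Set.Ioo (0:ℝ) 1, ∃ D, HasDerivAt (QQ F A) D x ∧ 0 ≤ D := by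
    intro x hx
    obtain ⟨D, h1, h2⟩ := (hm x hx).russo hx.1.le hx.2.le dA iA
    exact ⟨D, h1, (Finset.sum_nonneg fun _ _ => measureReal_nonneg).trans h2⟩
  have : MonotoneOn (QQ F A) (Set.Ioo (0:ℝ) 1) := by
    refine monotoneOn_of_deriv_nonneg (convex_Ioo 0 1) ?_ ?_ ?_
    · intro x hx
      obtain ⟨D, h1, h2⟩ := der x hx
      exact h1.continuousAt.continuousWithinAt
    · intro x hx
      rw [interior_Ioo] at hx
      obtain ⟨D, h1, h2⟩ := der x hx
      exact h1.differentiableAt.differentiableWithinAt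
    · intro x hx
      rw [interior_Ioo] at hx
      obtain ⟨D, h1, h2⟩ := der x hx
      rw [h1.deriv]; exact h2
  exact this ⟨hp, by linarith⟩ ⟨by linarith, hr⟩ hpr

def SS (n : ℕ) (ω : Om) : Set V := {v | nm v ≤ n ∧ ¬ ∃ b, nm b = n ∧ cn ω {v | nm v ≤ n} v b}

lemma SS_dep {n : ℕ} {S : Set V} {F : Finset E}
    (hF : ∀ e : E, nm e.1 ≤ n → nm (tgt e) ≤ n → (e.1 ∉ S ∨ tgt e ∉ S) → e ∈ F) :
    Dep F {ω : Om | SS n ω = S} := by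
  intro ω ω' H hS
  have hS : SS n ω = S := hS
  have hst : ∀ u v, nm u ≤ n → nm v ≤ n → u ∉ S → (st ω u v ↔ st ω' u v) := by
    intro u v hu hv huC
    constructor
    all_goals
      rintro ⟨e, h1, h2⟩
      have : e ∈ F := by
        rcases h2 with ⟨rfl, rfl⟩ | ⟨rfl, rfl⟩
        · exact hF _ hu hv (Or.inl huC)
        · exact hF _ hv hu (Or.inr huC)
      have := H e this
      exact ⟨e, by simp_all, h2⟩
  have out : ∀ v b, nm b = n → cn ω {v | nm v ≤ n} b v → v ∉ S := by
    intro v b hb h hv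
    rw [← hS] at hv
    exact hv.2 ⟨b, hb, h.symm⟩
  have z : ∀ v b, nm b = n → cn ω {v | nm v ≤ n} b v → cn ω' {v | nm v ≤ n} b v := by
    intro v b hb h
    induction h with
    | refl => exact .refl
    | tail h3 h4 ih => exact .tail ih ⟨(hst _ _ h4.2.1 h4.2.2 (out _ _ hb h3)).1 h4.1, h4.2⟩
  have z' : ∀ v b, nm b = n → cn ω' {v | nm v ≤ n} b v → v ∉ S := by
    intro v b hb h
    induction h with
    | refl => exact out _ _ hb .refl
    | @tail u w h3 h4 ih =>
      have h5 := (hst _ _ h4.2.1 h4.2.2 ih).2 h4.1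
      have : ∃ b, nm b = n ∧ cn ω {v | nm v ≤ n} u b := by
        by_contra hc
        exact ih (hS ▸ ⟨h4.2.1, hc⟩)
      obtain ⟨b', h6, h7⟩ := this
      exact out _ b' h6 (.tail h7.symm ⟨h5, h4.2⟩)
  change SS n ω' = S
  ext v
  constructor
  · rintro ⟨h1, h2⟩
    rw [← hS]
    exact ⟨h1, fun ⟨b, h3, h4⟩ => h2 ⟨b, h3, (z _ _ h3 h4.symm).symm⟩⟩
  · intro h
    have h' := h
    rw [← hS] at h'
    exact ⟨h'.1, fun ⟨b, h3, h4⟩ => z' _ _ h3 h4.symm h⟩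

open Classical in
lemma D2a {m : ℝ → Measure Om} (hm : ∀ p ∈ Set.Ioo (0:ℝ) 1, Bern p (m p)) {p : ℝ} (hp : 1/2 ≤ p) (hp1 : p < 1)
    {n : ℕ} :
    1 - th (m p) n ≤ ∑ e ∈ eds (nm_fin n), (m p).real (Piv (ev {v | nm v ≤ n} {0} {v | nm v = n}) e) := by
  have hb := hm p ⟨by linarith, hp1⟩
  have := hb.1
  have hp0 : 0 ≤ p := by linarith
  set A := ev {v | nm v ≤ n} {0} {v | nm v = n} with hA
  set F := eds (nm_fin n) with hF
  have dA : Dep F A := ev_dep _ _ _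
  set O := F ×ˢ (Finset.univ : Finset Bool) with hO
  set P : Finset (Finset V) := (nm_fin n).toFinset.powerset.filter (fun S => (0:V) ∈ S ∧ ∀ v ∈ S, nm v < n)
  let X : Finset V → Set Om := fun S => {ω : Om | SS n ω = (S : Set V)}
  have xm : ∀ S, MeasurableSet (X S) := fun S =>
    (SS_dep (F := F) fun e h1 _ _ => mem_eds.2 h1).meas
  have xd : ∀ S S', S ≠ S' → Disjoint (X S) (X S') := by
    intro C C' hne
    rw [Set.disjoint_left]
    intro ω h1 h2
    exact hne (Finset.coe_injective (Eq.trans (Eq.symm h1) h2))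
  have cov : 1 - th (m p) n ≤ ∑ S ∈ P, (m p).real (X S) := by
    have h1 : (m p).real Aᶜ = 1 - th (m p) n := probReal_compl_eq_one_sub dA.meas
    rw [← h1]
    refine le_trans (measureReal_mono ?_ (measure_ne_top _ _)) (measureReal_biUnion_finset_le _ _)
    intro ω hω
    simp only [Set.mem_iUnion]
    have hf : (SS n ω).Finite := (nm_fin n).subset fun v hv => hv.1
    refine ⟨hf.toFinset, ?_, by simp [X]⟩
    rw [Finset.mem_filter, Finset.mem_powerset]
    refine ⟨Set.Finite.toFinset_subset_toFinset.2 fun v hv => hv.1, ?_, ?_⟩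
    · rw [Set.Finite.mem_toFinset]
      refine ⟨by simp [nm], ?_⟩
      rintro ⟨b, h1, h2⟩
      exact hω ⟨0, by simp [nm], b, h1.le, rfl, h1, h2⟩
    · intro v hv
      rw [Set.Finite.mem_toFinset] at hv
      exact lt_of_le_of_ne hv.1 fun h => hv.2 ⟨v, h, .refl⟩
  have piv : ∀ o ∈ O, ∑ S ∈ P, (m p).real (X S) * (if src o ∈ S ∧ dst o ∉ S then (m p).real (ev S {0} {src o}) else 0)
      ≤ (m p).real (Piv A o.1) := by
    intro o ho
    have : ∀ S ∈ P, (m p).real (X S) * (if src o ∈ S ∧ dst o ∉ S then (m p).real (ev S {0} {src o}) else 0)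
        = (m p).real (X S ∩ {ω | (src o ∈ S ∧ dst o ∉ S) ∧ ω ∈ ev S {0} {src o}}) := by
      intro S hS
      split_ifs with hc
      · simp only [hc, true_and, not_false_eq_true]
        have i1 : Dep (F.filter fun e => e.1 ∉ S ∨ tgt e ∉ S) (X S) := SS_dep fun e h1 h2 h3 => by
          rw [Finset.mem_filter]; exact ⟨mem_eds.2 h1, h3⟩
        have i2 : Dep (S ×ˢ (Finset.univ : Finset Bool) |>.filter fun e => tgt e ∈ S) (ev (S : Set V) {0} {src o}) := ev_dep' (fun e h1 h2 => by
          rw [Finset.mem_filter, Finset.mem_product]; exact ⟨⟨h1, Finset.mem_univ _⟩, h2⟩) _ _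
        refine (hb.indep hp0 hp1.le ?_ i1 i2).symm
        rw [Finset.disjoint_left]
        intro e h1 h2
        rw [Finset.mem_filter] at h1 h2
        rw [Finset.mem_product] at h2
        exact h1.2.elim (fun h => h h2.1.1) (fun h => h h2.2)
      · simp [hc]
    rw [Finset.sum_congr rfl this, ← measureReal_biUnion_finset]
    · refine measureReal_mono ?_ (measure_ne_top _ _)
      intro ω hω
      simp only [Set.mem_iUnion] at hω
      obtain ⟨S, hS, h1, ⟨h2, h3⟩, a, ha, b, hb', rfl, rfl, h4⟩ := hω
      have h1 : SS n ω = S := h1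
      rw [Finset.mem_filter] at hS
      have hsub : (S : Set V) ⊆ {v | nm v ≤ n} := fun v hv => (hS.2.2 v hv).le
      have hdn : nm (dst o) ≤ n := by have := lipn _ _ (or_nb o); have := hS.2.2 _ h2; omega
      have hd : ∃ b, nm b = n ∧ cn ω {v | nm v ≤ n} (dst o) b := by
        by_contra hc
        exact h3 (Finset.mem_coe.1 (h1 ▸ ⟨hdn, hc⟩))
      have hin : ∀ v ∈ S, ¬ ∃ b, nm b = n ∧ cn ω {v | nm v ≤ n} v b := by
        intro v hv
        have : v ∈ SS n ω := by rw [h1]; exact hv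
        exact this.2
      obtain ⟨b, hb1, hb2⟩ := hd
      refine ⟨?_, ?_, Function.update ω o.1 true, ?_, by simp, fun f hf => by simp [hf]⟩
      · by_contra hne
        exact hin _ h2 ⟨b, hb1, .head ⟨or_st (by simpa using hne), hsub h2, hdn⟩ hb2⟩
      · rintro ⟨a, ha', b', hb'', rfl, h5, h6⟩
        exact hin _ hS.2.1 ⟨b', h5, h6⟩
      · have up : ∀ e, ω e = true → Function.update ω o.1 true e = true := by
          intro e he
          by_cases h : e = o.1
          · subst h; simp
          · simp [h, he]
        refine ⟨0, hsub ha, b, hb1.le, rfl, hb1, ?_⟩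
        refine ((h4.mono hsub).cong fun e _ _ => up e).trans ?_
        exact .head ⟨or_st (by simp), hsub h2, hdn⟩ (hb2.cong fun e _ _ => up e)
    · intro C _ C' _ hne
      exact (xd C C' hne).mono Set.inter_subset_left Set.inter_subset_left
    · intro S _
      refine (xm S).inter ?_
      by_cases hc : src o ∈ S ∧ dst o ∉ S
      · simp only [hc, true_and, not_false_eq_true]
        exact (ev_dep S.finite_toSet _ _).meas
      · simp [hc]
  have hpsi : ∀ S ∈ P, 2 ≤ psi (m p) n S := by
    intro S hS
    rw [Finset.mem_filter] at hS
    refine (D1 (hm (1/2) (by norm_num)) hS.2.1 hS.2.2).trans ?_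
    refine Finset.sum_le_sum fun o _ => ?_
    split_ifs
    · exact bern_mono hm (ev_ok S.finite_toSet _ _) (by norm_num) hp hp1
    · exact le_rfl
  have h2 : ∑ o ∈ O, (m p).real (Piv A o.1) = 2 * ∑ e ∈ F, (m p).real (Piv A e) := by
    rw [hO, Finset.sum_product]
    simp [Finset.mul_sum, two_mul]
  have h3 : ∑ S ∈ P, (m p).real (X S) * 2 ≤ ∑ o ∈ O, (m p).real (Piv A o.1) := by
    refine le_trans ?_ (Finset.sum_le_sum piv)
    rw [Finset.sum_comm]
    refine Finset.sum_le_sum fun S hS => ?_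
    rw [← Finset.mul_sum]
    have h := hpsi S hS
    refine mul_le_mul_of_nonneg_left (h.trans (le_of_eq ?_)) measureReal_nonneg
    unfold psi
    refine Finset.sum_congr rfl fun o _ => ?_
    simp only [Finset.mem_coe]
  rw [← Finset.sum_mul] at h3
  linarith

lemma D2 {m : ℝ → Measure Om} (hm : ∀ p ∈ Set.Ioo (0:ℝ) 1, Bern p (m p)) {p : ℝ} (hp : 1/2 ≤ p) (hp1 : p < 1)
    (n : ℕ) : 1 - Real.exp (1/2 - p) ≤ th (m p) n := by
  set A := ev {v | nm v ≤ n} {0} {v | nm v = n} with hA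
  set F := eds (nm_fin n) with hF
  have dA : Dep F A := ev_dep _ _ _
  have form : ∀ x ∈ Set.Icc (1/2) p, th (m x) n = QQ F A x := fun x hx =>
    (hm x ⟨by linarith [hx.1], by linarith [hx.2]⟩).form (by linarith [hx.1]) (by linarith [hx.2]) dA
  have der : ∀ x ∈ Set.Icc (1/2) p, ∃ D, HasDerivAt (fun x => (1 - QQ F A x) * Real.exp x) D x ∧ D ≤ 0 := by
    intro x hx
    obtain ⟨D, h1, h2⟩ := (hm x ⟨by linarith [hx.1], by linarith [hx.2]⟩).russo (by linarith [hx.1]) (by linarith [hx.2]) dA (ev_incr _ _ _)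
    have h3 := D2a hm (p := x) (n := n) hx.1 (by linarith [hx.2])
    rw [form x hx] at h3
    refine ⟨_, (h1.const_sub 1).mul (Real.hasDerivAt_exp x), ?_⟩
    have := Real.exp_pos x
    have h4 : 1 - QQ F A x ≤ D := h3.trans h2
    nlinarith
  have anti : AntitoneOn (fun x => (1 - QQ F A x) * Real.exp x) (Set.Icc (1/2) p) := by
    refine antitoneOn_of_deriv_nonpos (convex_Icc _ _) ?_ ?_ ?_
    · intro x hx
      obtain ⟨D, h1, h2⟩ := der x hx
      exact h1.continuousAt.continuousWithinAt
    · intro x hx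
      obtain ⟨D, h1, h2⟩ := der x (interior_subset hx)
      exact h1.differentiableAt.differentiableWithinAt
    · intro x hx
      obtain ⟨D, h1, h2⟩ := der x (interior_subset hx)
      rw [h1.deriv]; exact h2
  have h := anti ⟨le_rfl, hp⟩ ⟨hp, le_rfl⟩ hp
  simp only at h
  rw [← form p ⟨hp, le_rfl⟩, ← form (1/2) ⟨le_rfl, hp⟩] at h
  have h0 : 0 ≤ th (m (1/2)) n := measureReal_nonneg
  have e1 := Real.exp_pos (1/2)
  have e2 := Real.exp_pos p
  have : 1 - th (m p) n ≤ Real.exp (1/2 - p) := by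
    rw [Real.exp_sub, le_div_iff₀ e2]
    nlinarith
  linarith


lemma hk2 {m : Measure Om} (hm : Bern (1/2) m) {A B : Set Om}
    (h : Ok A) (h' : Ok B) {a b : ℝ} (ha : a ≤ m.real A) (hb : b ≤ m.real B) (b0 : 0 ≤ b) :
    a * b ≤ m.real (A ∩ B) := hk hm (by norm_num) (by norm_num) h h' ha hb b0

lemma Au.le2 {τ : V → V} (h : Au τ) {m : Measure Om} (hm : Bern (1/2) m)
    {a b c d : ℤ} {A B R' A' B' : Set V} (h2 : ∀ v ∈ Rc a b c d, τ v ∈ R' ∧ (v ∈ A → τ v ∈ A') ∧ (v ∈ B → τ v ∈ B')) :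
    m.real (ev (Rc a b c d) A B) ≤ m.real (ev R' A' B') :=
  h.le hm (by norm_num) (by norm_num) (Rc_fin _ _ _ _) (fun v hv => (h2 v hv).1) (fun v hv => (h2 v hv).2.1)
    (fun v hv => (h2 v hv).2.2)

def HC (a b c d : ℤ) : Set Om := ev (Rc a b c d) {v | v.1 = a} {v | v.1 = b}
def VC (a b c d : ℤ) : Set Om := ev (Rc a b c d) {v | v.2 = c} {v | v.2 = d}

lemma HC_ok (a b c d : ℤ) : Ok (HC a b c d) := ev_ok (Rc_fin _ _ _ _) _ _
lemma VC_ok (a b c d : ℤ) : Ok (VC a b c d) := ev_ok (Rc_fin _ _ _ _) _ _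

lemma HC_le {m : Measure Om} (hm : Bern (1/2) m) {W H a b c d : ℤ} (h1 : b - a ≤ W) (h2 : H ≤ d - c)
    (h3 : a ≤ b) : q m W H ≤ m.real (HC a b c d) := by
  have := hm.1
  refine ((Au.trans a c).le2 hm (R' := Rc a (a + W) c d) (A' := {v | v.1 = a}) (B' := {v | v.1 = a + W}) ?_).trans
    (measureReal_mono ?_)
  · intro v hv; simp only [mem_Rc, Set.mem_ofPred_eq] at *; omega
  · rintro ω ⟨x, hx, y, hy, h4, h5, h6⟩
    simp only [Set.mem_ofPred_eq] at h4 h5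
    obtain ⟨z, z1, z2, z3⟩ := cn.first lip1 (t := b) hx h6 (by omega) (by omega)
    simp only [mem_Rc] at *
    refine ⟨x, ?_, z, ?_, h4, z2, z3.mono fun v hv => ?_⟩ <;> simp only [mem_Rc, Set.mem_ofPred_eq] at * <;> omega

lemma VC_le {m : Measure Om} (hm : Bern (1/2) m) {W H a b c d : ℤ} (h1 : d - c ≤ W) (h2 : H ≤ b - a)
    (h3 : c ≤ d) : q m W H ≤ m.real (VC a b c d) := by
  refine (HC_le hm h1 h2 h3).trans (Au.swap.le2 hm ?_)
  intro v hv; simp only [mem_Rc, Set.mem_ofPred_eq] at *; omega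

lemma q_nonneg (m : Measure Om) (W H : ℤ) : 0 ≤ q m W H := measureReal_nonneg

lemma q_sq {m : Measure Om} (hm : Bern (1/2) m) {n h : ℤ} (hn : 0 ≤ n) (hh : n ≤ h) (h1 : 1 ≤ h) : 1/2 ≤ q m n h := by
  have := half_le hm (n := h.toNat) (by omega)
  rw [Int.toNat_of_nonneg (by omega)] at this
  exact this.trans (HC_le hm (by omega) (by omega) (by omega))

lemma amp {m : Measure Om} (hm : Bern (1/2) m) {W₁ W₂ h : ℤ} (hh : 1 ≤ h) (h1 : h ≤ W₁) (h2 : h ≤ W₂) :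
    q m W₁ h * q m W₂ h * (1/2) ≤ q m (W₁ + W₂ - h) h := by
  have := hm.1
  refine (hk2 hm ((HC_ok 0 W₁ 0 h).inter (HC_ok (W₁ - h) (W₁ + W₂ - h) 0 h)) (VC_ok (W₁ - h) W₁ 0 h)
    (hk2 hm (HC_ok _ _ _ _) (HC_ok _ _ _ _) (HC_le hm (by omega) (by omega) (by omega))
    (HC_le hm (by omega) (by omega) (by omega)) (q_nonneg _ _ _))
    ((q_sq hm (by omega) (le_refl h) hh).trans (VC_le hm (by omega) (by omega) (by omega))) (by norm_num)).trans
    (measureReal_mono ?_)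
  rintro ω ⟨⟨⟨a, ha, b, hb, a1, b1, ab⟩, ⟨c, hc, d, hd, c1, d1, cd⟩⟩, ⟨e, he, f, hf, e1, f1, ef⟩⟩
  have s1 : Rc 0 W₁ 0 h ⊆ Rc 0 (W₁ + W₂ - h) 0 h := by intro v; simp only [mem_Rc]; omega
  have s2 : Rc (W₁ - h) (W₁ + W₂ - h) 0 h ⊆ Rc 0 (W₁ + W₂ - h) 0 h := by intro v; simp only [mem_Rc]; omega
  have s3 : Rc (W₁ - h) W₁ 0 h ⊆ Rc 0 (W₁ + W₂ - h) 0 h := by intro v; simp only [mem_Rc]; omega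
  simp only [Set.mem_ofPred_eq] at *
  have k1 : cn ω (Rc 0 (W₁ + W₂ - h) 0 h) e a := by
    refine G1 s3 s1 ef ab he ha ?_ ?_ <;> intro v <;> simp only [mem_Rc] <;> omega
  have k2 : cn ω (Rc 0 (W₁ + W₂ - h) 0 h) e c := by
    refine G1 s3 s2 ef cd he hc ?_ ?_ <;> intro v <;> simp only [mem_Rc] <;> omega
  exact ⟨a, s1 ha, d, s2 hd, a1, d1, (k1.symm.trans k2).trans (cd.mono s2)⟩

lemma amp_it {m : Measure Om} (hm : Bern (1/2) m) {W h : ℤ} {c : ℝ} (c0 : 0 ≤ c) (hh : 1 ≤ h) (h1 : h ≤ W)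
    (hc : c ≤ q m W h) (k : ℕ) : c * (c / 2) ^ k ≤ q m (W + k * (W - h)) h := by
  induction k with
  | zero => simpa using hc
  | succ k ih =>
    have h2 : (0:ℤ) ≤ k * (W - h) := mul_nonneg (by omega) (by omega)
    have := amp hm (W₁ := W + k * (W - h)) (W₂ := W) hh (by omega) h1
    have e : W + (k + 1 : ℕ) * (W - h) = W + k * (W - h) + W - h := by push_cast; ring
    rw [e]
    refine le_trans ?_ this
    have := mul_le_mul ih hc c0 (q_nonneg _ _ _)
    rw [pow_succ]; linarith

noncomputable def aa (m : Measure Om) (n s : ℤ) : ℝ :=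
  m.real (ev (Rc (-n) n (-n) n) {v | v.1 = -n} {v | v.1 = n ∧ 0 ≤ v.2 ∧ v.2 ≤ s})
noncomputable def bb (m : Measure Om) (n s : ℤ) : ℝ :=
  m.real (ev (Rc (-n) n (-n) n) {v | v.1 = -n} {v | v.1 = n ∧ s ≤ v.2})

lemma aa_mono {m : Measure Om} (hm : Bern (1/2) m) {n s t : ℤ} (h : s ≤ t) : aa m n s ≤ aa m n t := by
  have := hm.1
  refine measureReal_mono (ev_mono (fun v h => h) (fun v _ h => h) fun v _ h => ?_)
  simp only [Set.mem_ofPred_eq] at *; omega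

lemma ev_split {R A B C D : Set V} (h : ∀ v ∈ R, v ∈ B → v ∈ C ∨ v ∈ D) : ev R A B ⊆ ev R A C ∪ ev R A D := by
  rintro ω ⟨a, ha, b, hb, h1, h2, h3⟩
  exact (h b hb h2).imp (fun h => ⟨a, ha, b, hb, h1, h, h3⟩) (fun h => ⟨a, ha, b, hb, h1, h, h3⟩)

lemma ev_split' {m : Measure Om} (hm : Bern (1/2) m) {R A B C D : Set V} (h : ∀ v ∈ R, v ∈ B → v ∈ C ∨ v ∈ D) :
    m.real (ev R A B) ≤ m.real (ev R A C) + m.real (ev R A D) := by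
  have := hm.1
  exact (measureReal_mono (ev_split h)).trans (measureReal_union_le _ _)

lemma Au.refl2 (c : ℤ) : Au fun v => (v.1, c - v.2) := Au.swap.comp ((Au.refl c).comp Au.swap)

lemma bb0 {m : Measure Om} (hm : Bern (1/2) m) {n : ℤ} (hn : 1 ≤ n) : 1/4 ≤ bb m n 0 := by
  have h1 := (q_sq hm (n := 2 * n) (h := 2 * n) (by omega) le_rfl (by omega)).trans (HC_le hm (a := -n) (b := n) (c := -n) (d := n) (by omega) (by omega) (by omega))
  have h2 := ev_split' hm (R := Rc (-n) n (-n) n) (A := {v | v.1 = -n}) (B := {v | v.1 = n})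
    (C := {v | v.1 = n ∧ 0 ≤ v.2}) (D := {v | v.1 = n ∧ v.2 ≤ 0}) (by intro v _; simp only [Set.mem_ofPred_eq]; omega)
  have h3 : m.real (ev (Rc (-n) n (-n) n) {v | v.1 = -n} {v | v.1 = n ∧ v.2 ≤ 0}) ≤ bb m n 0 := by
    refine (Au.refl2 0).le2 hm ?_
    intro v hv; simp only [mem_Rc, Set.mem_ofPred_eq] at *; omega
  have h4 : bb m n 0 = m.real (ev (Rc (-n) n (-n) n) {v | v.1 = -n} {v | v.1 = n ∧ 0 ≤ v.2}) := rfl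
  have h5 : HC (-n) n (-n) n = ev (Rc (-n) n (-n) n) {v | v.1 = -n} {v | v.1 = n} := rfl
  rw [h5] at h1
  linarith

noncomputable def al (m : Measure Om) (n : ℤ) : ℕ := sInf {k : ℕ | 1/8 ≤ aa m n k}

lemma al_spec {m : Measure Om} (hm : Bern (1/2) m) {n : ℤ} (hn : 1 ≤ n) :
    1/8 ≤ aa m n (al m n) ∧ 1/8 ≤ bb m n (al m n) ∧ (al m n : ℤ) ≤ n ∧ ∀ s : ℤ, aa m n s < 1/8 → s < al m n := by
  have := hm.1
  have h1 : n.toNat ∈ {k : ℕ | 1/8 ≤ aa m n k} := by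
    change 1/8 ≤ aa m n _
    refine le_trans (le_trans (by norm_num) (bb0 hm hn)) (measureReal_mono (ev_mono (fun v h => h) (fun v _ h => h) fun v hv h => ?_))
    simp only [mem_Rc, Set.mem_ofPred_eq] at *; omega
  have h2 : 1/8 ≤ aa m n (al m n) := Nat.sInf_mem ⟨_, h1⟩
  have h3 : al m n ≤ n.toNat := Nat.sInf_le h1
  refine ⟨h2, ?_, by omega, fun s hs => ?_⟩
  · have h4 := bb0 hm hn
    rcases Nat.eq_zero_or_pos (al m n) with h | h
    · rw [h]; push_cast; linarith
    · have h5 : ¬ 1/8 ≤ aa m n (al m n - 1 : ℕ) := Nat.notMem_of_lt_sInf (s := {k : ℕ | 1/8 ≤ aa m n k}) (m := al m n - 1) (by change _ < al m n; omega)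
      rw [show ((al m n - 1 : ℕ) : ℤ) = al m n - 1 by omega] at h5
      have h6 : bb m n 0 ≤ aa m n (al m n - 1) + bb m n (al m n) := by
        refine ev_split' hm ?_
        intro v _; simp only [Set.mem_ofPred_eq]; omega
      linarith
  · by_contra h6
    have := aa_mono hm (n := n) (not_lt.1 h6)
    linarith


lemma L2a {m : Measure Om} (hm : Bern (1/2) m) {r α c l u : ℤ} (hr : 1 ≤ r)
    (hc0 : 0 ≤ c) (hc : c ≤ 2 * r) (hl : c - α ≤ l) (hu : u ≤ c + α) (hb : 1/8 ≤ bb m r α)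
    (ha : 1/16 ≤ m.real (ev (Rc (-(2*r)) (2*r) (-(2*r)) (2*r)) {v | v.1 = -(2*r)} {v | v.1 = 2*r ∧ l ≤ v.2 ∧ v.2 ≤ u})) :
    (1/8)*(1/8)*((1/8)*(1/8))*(1/2)*((1/16)*(1/16)) ≤ q m (6*r) (5*r) := by
  have := hm.1
  set Q := Rc 0 (2*r) (c-r) (c+r) with hQ
  have fQ : Q.Finite := Rc_fin _ _ _ _
  have b1 : 1/8 ≤ m.real (ev Q {v | v.1 = 0} {v | v.1 = 2*r ∧ c + α ≤ v.2}) := by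
    refine hb.trans ((Au.trans r c).le2 hm ?_)
    intro v hv; simp only [hQ, mem_Rc, Set.mem_ofPred_eq] at *; omega
  have b2 : 1/8 ≤ m.real (ev Q {v | v.1 = 0} {v | v.1 = 2*r ∧ v.2 ≤ c - α}) := by
    refine b1.trans ((Au.refl2 (2*c)).le2 hm ?_)
    intro v hv; simp only [hQ, mem_Rc, Set.mem_ofPred_eq] at *; omega
  have b3 : 1/8 ≤ m.real (ev Q {v | v.1 = 2*r} {v | v.1 = 0 ∧ c + α ≤ v.2}) := by
    refine b1.trans ((Au.refl (2*r)).le2 hm ?_)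
    intro v hv; simp only [hQ, mem_Rc, Set.mem_ofPred_eq] at *; omega
  have b4 : 1/8 ≤ m.real (ev Q {v | v.1 = 2*r} {v | v.1 = 0 ∧ v.2 ≤ c - α}) := by
    refine b2.trans ((Au.refl (2*r)).le2 hm ?_)
    intro v hv; simp only [hQ, mem_Rc, Set.mem_ofPred_eq] at *; omega
  have b5 : 1/2 ≤ m.real (VC 0 (2*r) (c-r) (c+r)) :=
    (q_sq hm (n := 2*r) (h := 2*r) (by omega) le_rfl (by omega)).trans (VC_le hm (by omega) (by omega) (by omega))
  have a2 : 1/16 ≤ m.real (ev (Rc 0 (4*r) (-(2*r)) (2*r)) {v | v.1 = 4*r} {v | v.1 = 0 ∧ l ≤ v.2 ∧ v.2 ≤ u}) := by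
    refine ha.trans ((Au.refl (2*r)).le2 hm ?_)
    intro v hv; simp only [mem_Rc, Set.mem_ofPred_eq] at *; omega
  have ok := fun A B => ev_ok fQ A B
  have o5 := VC_ok 0 (2*r) (c-r) (c+r)
  have ok6 := fun a b c d A B => ev_ok (Rc_fin a b c d) A B
  refine (hk2 hm ((((ok _ _).inter (ok _ _)).inter ((ok _ _).inter (ok _ _))).inter o5) ((ok6 _ _ _ _ _ _).inter (ok6 _ _ _ _ _ _))
    (hk2 hm (((ok _ _).inter (ok _ _)).inter ((ok _ _).inter (ok _ _))) o5
      (hk2 hm ((ok _ _).inter (ok _ _)) ((ok _ _).inter (ok _ _))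
        (hk2 hm (ok _ _) (ok _ _) b1 b2 (by norm_num)) (hk2 hm (ok _ _) (ok _ _) b3 b4 (by norm_num)) (by norm_num))
      b5 (by norm_num))
    (hk2 hm (ok6 _ _ _ _ _ _) (ok6 _ _ _ _ _ _) ha a2 (by norm_num)) (by norm_num)).trans ?_
  have fin : m.real (HC (-(2*r)) (4*r) (-(2*r)) (3*r)) ≤ q m (6*r) (5*r) := by
    refine (Au.trans (2*r) (2*r)).le2 hm ?_
    intro v hv; simp only [mem_Rc, Set.mem_ofPred_eq] at *; omega
  refine le_trans (measureReal_mono ?_) fin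
  rintro ω ⟨⟨⟨⟨⟨p1, hp1, q1, hq1, p1', q1', k1⟩, ⟨p2, hp2, q2, hq2, p2', q2', k2⟩⟩,
    ⟨⟨p3, hp3, q3, hq3, p3', q3', k3⟩, ⟨p4, hp4, q4, hq4, p4', q4', k4⟩⟩⟩,
    ⟨x, hx, y, hy, x', y', k5⟩⟩,
    ⟨⟨C, hC, D, hD, C', D', k6⟩, ⟨F, hF, G, hG, F', G', k7⟩⟩⟩
  simp only [Set.mem_ofPred_eq] at *
  have g1 : cn ω Q x p1 := by
    refine G1 le_rfl le_rfl k5 k1 hx hp1 ?_ ?_ <;> intro v <;> simp only [hQ, mem_Rc] <;> omega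
  have g2 : cn ω Q x p2 := by
    refine G1 le_rfl le_rfl k5 k2 hx hp2 ?_ ?_ <;> intro v <;> simp only [hQ, mem_Rc] <;> omega
  have g3 : cn ω Q x q3 := by
    refine G1 le_rfl le_rfl k5 k3.symm hx hq3 ?_ ?_ <;> intro v <;> simp only [hQ, mem_Rc] <;> omega
  have g4 : cn ω Q x q4 := by
    refine G1 le_rfl le_rfl k5 k4.symm hx hq4 ?_ ?_ <;> intro v <;> simp only [hQ, mem_Rc] <;> omega
  set R := Rc (-(2*r)) (4*r) (-(2*r)) (3*r) with hR
  have sQ : Q ⊆ R := by intro v; simp only [hR, hQ, mem_Rc]; omega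
  have s1 : Rc (-(2*r)) (2*r) (-(2*r)) (2*r) ⊆ R := by intro v; simp only [hR, mem_Rc]; omega
  have s2 : Rc 0 (4*r) (-(2*r)) (2*r) ⊆ R := by intro v; simp only [hR, mem_Rc]; omega
  have e1 : cn ω Q x q1 := g1.trans k1
  have e2 : cn ω Q x q2 := g2.trans k2
  have f1 : cn ω R q2 C := by
    refine G2 sQ s1 (e2.symm.trans e1) k6 hq2 hC (N := 2*r) (L := -(2*r)) (M := 2*r) (by omega) (by omega) (by omega) ?_ ?_ (by omega) (by omega)
      <;> intro v <;> simp only [hQ, mem_Rc] <;> omega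
  have f2 : cn ω R q4 F := by
    refine G2' sQ s2 (g4.symm.trans g3) k7 hq4 hF (N := 0) (L := -(2*r)) (M := 2*r) (by omega) (by omega) (by omega) ?_ ?_ (by omega) (by omega)
      <;> intro v <;> simp only [hQ, mem_Rc] <;> omega
  refine ⟨C, s1 hC, F, s2 hF, C', F', ?_⟩
  exact (f1.symm.trans ((e2.symm.trans g4).mono sQ)).trans f2

/-- crossing constants -/
noncomputable def ca : ℝ := (1/8)*(1/8)*((1/8)*(1/8))*(1/2)*((1/16)*(1/16))
noncomputable def cb : ℝ := ca * (ca / 2) ^ 24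
noncomputable def cc : ℝ := 1/8 * (1/8) * (cb * cb * (cb * cb))
noncomputable def cd : ℝ := cc * (cc / 2) ^ 4

lemma ca_pos : 0 < ca := by unfold ca; norm_num
lemma cb_pos : 0 < cb := by have := ca_pos; unfold cb; positivity
lemma cc_pos : 0 < cc := by have := cb_pos; unfold cc; positivity
lemma cd_pos : 0 < cd := by have := cc_pos; unfold cd; positivity

lemma L2 {m : Measure Om} (hm : Bern (1/2) m) {r : ℤ} (hr : 1 ≤ r) (h : al m (2*r) ≤ 4 * al m r) :
    cb ≤ q m (30*r) (5*r) := by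
  have h1 : ca ≤ q m (6*r) (5*r) := by
    obtain ⟨-, hb, hα, -⟩ := al_spec hm hr
    obtain ⟨ha, -, -, -⟩ := al_spec hm (n := 2*r) (by omega)
    obtain ⟨α, hα'⟩ : ∃ α : ℤ, α = (al m r : ℤ) := ⟨_, rfl⟩
    rw [← hα'] at hα hb
    have ha := ha.trans (aa_mono hm (t := 4*α) (by omega))
    have h3 := ev_split' hm (R := Rc (-(2*r)) (2*r) (-(2*r)) (2*r)) (A := {v | v.1 = -(2*r)})
      (B := {v | v.1 = 2*r ∧ 0 ≤ v.2 ∧ v.2 ≤ 4*α}) (C := {v | v.1 = 2*r ∧ 0 ≤ v.2 ∧ v.2 ≤ 2*α})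
      (D := {v | v.1 = 2*r ∧ 2*α ≤ v.2 ∧ v.2 ≤ min (4*α) (2*r)})
      (by intro v; simp only [mem_Rc, Set.mem_ofPred_eq]; omega)
    by_cases h4 : 1/16 ≤ m.real (ev (Rc (-(2*r)) (2*r) (-(2*r)) (2*r)) {v | v.1 = -(2*r)} {v | v.1 = 2*r ∧ 0 ≤ v.2 ∧ v.2 ≤ 2*α})
    · exact L2a hm hr (c := α) (by omega) (by omega) (by omega) (by omega) hb h4
    · refine L2a hm hr (c := min (3*α) (2*r)) (l := 2*α) (u := min (4*α) (2*r)) (by omega) (by omega) (by omega) (by omega) hb ?_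
      unfold aa at ha
      linarith
  have := amp_it hm ca_pos.le (by omega) (by omega) h1 24
  rwa [show 6 * r + (24:ℕ) * (6*r - 5*r) = 30*r by push_cast; ring] at this

lemma circ_conn {ω : Om} {R : Set V} {s : ℤ} (hs : 1 ≤ s) (hR : Rc (-(3*s)) (3*s) (-(3*s)) (3*s) ⊆ R)
    (h1 : ω ∈ VC s (2*s) (-(3*s)) (3*s)) (h2 : ω ∈ VC (-(2*s)) (-s) (-(3*s)) (3*s))
    (h3 : ω ∈ HC (-(3*s)) (3*s) s (2*s)) (h4 : ω ∈ HC (-(3*s)) (3*s) (-(2*s)) (-s)) :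
    ∃ P, ∀ a b, a ∈ R → nm a ≤ s → 2*s ≤ nm b → cn ω R a b → cn ω R a P := by
  obtain ⟨p1, hp1, q1, hq1, p1', q1', k1⟩ := h1
  obtain ⟨p2, hp2, q2, hq2, p2', q2', k2⟩ := h2
  obtain ⟨p3, hp3, q3, hq3, p3', q3', k3⟩ := h3
  obtain ⟨p4, hp4, q4, hq4, p4', q4', k4⟩ := h4
  have s1 : Rc s (2*s) (-(3*s)) (3*s) ⊆ R := .trans (by intro v; simp only [mem_Rc]; omega) hR
  have s2 : Rc (-(2*s)) (-s) (-(3*s)) (3*s) ⊆ R := .trans (by intro v; simp only [mem_Rc]; omega) hR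
  have s3 : Rc (-(3*s)) (3*s) s (2*s) ⊆ R := .trans (by intro v; simp only [mem_Rc]; omega) hR
  have s4 : Rc (-(3*s)) (3*s) (-(2*s)) (-s) ⊆ R := .trans (by intro v; simp only [mem_Rc]; omega) hR
  simp only [Set.mem_ofPred_eq] at *
  have e13 : cn ω R p1 p3 := by
    refine G1 s1 s3 k1 k3 hp1 hp3 ?_ ?_ <;> intro v <;> simp only [mem_Rc] <;> omega
  have e14 : cn ω R p1 p4 := by
    refine G1 s1 s4 k1 k4 hp1 hp4 ?_ ?_ <;> intro v <;> simp only [mem_Rc] <;> omega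
  have e23 : cn ω R p2 p3 := by
    refine G1 s2 s3 k2 k3 hp2 hp3 ?_ ?_ <;> intro v <;> simp only [mem_Rc] <;> omega
  refine ⟨p1, fun a b ha na nb h => ?_⟩
  obtain ⟨c, d, -, hac, h | h | h | h⟩ := arm (s := s) (t := 2*s) (by omega) ha h na nb <;> obtain ⟨⟨h5, h6⟩, h7, h8⟩ := h
  · have h9 := h8.mem (⟨cl_sub ha hac, h7⟩ : c ∈ R ∩ _)
    have h8 : cn ω (Rc s (2*s) (-(2*s)) (2*s)) c d := h8.mono Set.inter_subset_right
    have : cn ω R p1 c := by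
      refine G1 s1 (.trans ?_ hR) k1 h8 hp1 h7 ?_ ?_ <;> intro v <;> simp only [mem_Rc] <;> omega
    exact hac.trans this.symm
  · have h9 := h8.mem (⟨cl_sub ha hac, h7⟩ : c ∈ R ∩ _)
    have h8 : cn ω (Rc (-(2*s)) (-s) (-(2*s)) (2*s)) c d := h8.mono Set.inter_subset_right
    have : cn ω R p2 d := by
      refine G1 s2 (.trans ?_ hR) k2 h8.symm hp2 h9.2 ?_ ?_ <;> intro v <;> simp only [mem_Rc] <;> omega
    exact hac.trans ((h8.mono (.trans (by intro v; simp only [mem_Rc]; omega) hR)).trans (this.symm.trans (e23.trans e13.symm)))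
  · have h9 := h8.mem (⟨cl_sub ha hac, h7⟩ : c ∈ R ∩ _)
    have h8 : cn ω (Rc (-(2*s)) (2*s) s (2*s)) c d := h8.mono Set.inter_subset_right
    have : cn ω R c p3 := by
      refine G1 (.trans ?_ hR) s3 h8 k3 h7 hp3 ?_ ?_ <;> intro v <;> simp only [mem_Rc] <;> omega
    exact hac.trans (this.trans e13.symm)
  · have h9 := h8.mem (⟨cl_sub ha hac, h7⟩ : c ∈ R ∩ _)
    have h8 : cn ω (Rc (-(2*s)) (2*s) (-(2*s)) (-s)) c d := h8.mono Set.inter_subset_right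
    have : cn ω R d p4 := by
      refine G1 (.trans ?_ hR) s4 h8.symm k4 h9.2 hp4 ?_ ?_ <;> intro v <;> simp only [mem_Rc] <;> omega
    exact hac.trans ((h8.mono (.trans (by intro v; simp only [mem_Rc]; omega) hR)).trans (this.trans e14.symm))

lemma four {m : Measure Om} (hm : Bern (1/2) m) {A B C D : Set Om} (oA : Ok A) (oB : Ok B) (oC : Ok C) (oD : Ok D)
    {c : ℝ} (c0 : 0 ≤ c) (hA : c ≤ m.real A) (hB : c ≤ m.real B) (hC : c ≤ m.real C) (hD : c ≤ m.real D) :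
    c * c * (c * c) ≤ m.real ((A ∩ B) ∩ (C ∩ D)) :=
  hk2 hm (oA.inter oB) (oC.inter oD) (hk2 hm oA oB hA hB c0) (hk2 hm oC oD hC hD c0) (by positivity)

lemma L3 {m : Measure Om} (hm : Bern (1/2) m) {s t : ℤ} (hs : 1 ≤ s) (hst : 3 * s ≤ t) (hg : cb ≤ q m (6*s) s)
    (ha : 1/8 ≤ aa m t s) : cd ≤ q m (12*t) (2*t) := by
  have := hm.1
  have h1 : cc ≤ q m (4*t) (2*t) := by
    have a1 : 1/8 ≤ m.real (ev (Rc (-(2*t)) 0 (-t) t) {v | v.1 = -(2*t)} {v | v.1 = 0 ∧ 0 ≤ v.2 ∧ v.2 ≤ s}) := by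
      refine ha.trans ((Au.trans (-t) 0).le2 hm ?_)
      intro v hv; simp only [mem_Rc, Set.mem_ofPred_eq] at *; omega
    have a2 : 1/8 ≤ m.real (ev (Rc 0 (2*t) (-t) t) {v | v.1 = 2*t} {v | v.1 = 0 ∧ 0 ≤ v.2 ∧ v.2 ≤ s}) := by
      refine a1.trans ((Au.refl 0).le2 hm ?_)
      intro v hv; simp only [mem_Rc, Set.mem_ofPred_eq] at *; omega
    have f := four hm (VC_ok s (2*s) (-(3*s)) (3*s)) (VC_ok (-(2*s)) (-s) (-(3*s)) (3*s)) (HC_ok (-(3*s)) (3*s) s (2*s))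
      (HC_ok (-(3*s)) (3*s) (-(2*s)) (-s)) cb_pos.le (hg.trans (VC_le hm (by omega) (by omega) (by omega)))
      (hg.trans (VC_le hm (by omega) (by omega) (by omega))) (hg.trans (HC_le hm (by omega) (by omega) (by omega)))
      (hg.trans (HC_le hm (by omega) (by omega) (by omega)))
    have o1 := ev_ok (Rc_fin (-(2*t)) 0 (-t) t) {v | v.1 = -(2*t)} {v | v.1 = 0 ∧ 0 ≤ v.2 ∧ v.2 ≤ s}
    have o2 := ev_ok (Rc_fin 0 (2*t) (-t) t) {v | v.1 = 2*t} {v | v.1 = 0 ∧ 0 ≤ v.2 ∧ v.2 ≤ s}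
    have cb0 := cb_pos
    refine (hk2 hm (o1.inter o2) (((VC_ok _ _ _ _).inter (VC_ok _ _ _ _)).inter ((HC_ok _ _ _ _).inter (HC_ok _ _ _ _)))
      (hk2 hm o1 o2 a1 a2 (by norm_num)) f (by positivity)).trans ?_
    have fin : m.real (HC (-(2*t)) (2*t) (-t) t) ≤ q m (4*t) (2*t) := by
      refine (Au.trans (2*t) t).le2 hm ?_
      intro v hv; simp only [mem_Rc, Set.mem_ofPred_eq] at *; omega
    refine le_trans (measureReal_mono ?_) fin
    rintro ω ⟨⟨⟨x, hx, y, hy, x', y', k1⟩, ⟨z, hz, w, hw, z', w', k2⟩⟩, ⟨⟨c1, c2⟩, ⟨c3, c4⟩⟩⟩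
    set R := Rc (-(2*t)) (2*t) (-t) t with hR
    have s1 : Rc (-(2*t)) 0 (-t) t ⊆ R := by intro v; simp only [hR, mem_Rc]; omega
    have s2 : Rc 0 (2*t) (-t) t ⊆ R := by intro v; simp only [hR, mem_Rc]; omega
    obtain ⟨P, hP⟩ := circ_conn (R := R) hs (by intro v; simp only [hR, mem_Rc]; omega) c1 c2 c3 c4
    simp only [Set.mem_ofPred_eq] at *
    have k3 := hP y x (s1 hy) (by unfold nm; omega) (by unfold nm; omega) (k1.symm.mono s1)
    have k4 := hP w z (s2 hw) (by unfold nm; omega) (by unfold nm; omega) (k2.symm.mono s2)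
    exact ⟨x, s1 hx, z, s2 hz, x', z', ((k1.mono s1).trans k3).trans (k4.symm.trans (k2.symm.mono s2))⟩
  have := amp_it hm cc_pos.le (by omega) (by omega) h1 4
  rwa [show 4 * t + (4:ℕ) * (4*t - 2*t) = 12*t by push_cast; ring] at this

/-- circuit in the annulus, to be used in the dual configuration -/
def XX (s : ℤ) : Set Om := (VC s (2*s) (-(3*s)) (3*s) ∩ VC (-(2*s)-1) (-s-1) (-(3*s)) (3*s)) ∩
  (HC (-(3*s)) (3*s) s (2*s) ∩ HC (-(3*s)) (3*s) (-(2*s)-1) (-s-1))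

lemma XX_le {m : Measure Om} (hm : Bern (1/2) m) {s : ℤ} (hs : 1 ≤ s) {c : ℝ} (c0 : 0 ≤ c) (hc : c ≤ q m (6*s) s) :
    c * c * (c * c) ≤ m.real (XX s) :=
  four hm (VC_ok _ _ _ _) (VC_ok _ _ _ _) (HC_ok _ _ _ _) (HC_ok _ _ _ _) c0
    (hc.trans (VC_le hm (by omega) (by omega) (by omega)))
    (hc.trans (VC_le hm (by omega) (by omega) (by omega))) (hc.trans (HC_le hm (by omega) (by omega) (by omega)))
    (hc.trans (HC_le hm (by omega) (by omega) (by omega)))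

lemma XX_block {ω : Om} {s : ℤ} (hs : 2 ≤ s) (hX : du ω ∈ XX s) {R : Set V} {a b : V} (ha : a ∈ R) (h1 : nm a ≤ s)
    (h2 : 2*s+1 ≤ nm b) (h : cn ω R a b) : False := by
  obtain ⟨⟨⟨p1, hp1, q1, hq1, p1', q1', k1⟩, ⟨p2, hp2, q2, hq2, p2', q2', k2⟩⟩,
    ⟨⟨p3, hp3, q3, hq3, p3', q3', k3⟩, ⟨p4, hp4, q4, hq4, p4', q4', k4⟩⟩⟩ := hX
  simp only [Set.mem_ofPred_eq] at *
  obtain ⟨c, d, -, hac, h | h | h | h⟩ := arm (s := s) (t := 2*s+1) (by omega) ha h h1 h2 <;>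
    obtain ⟨⟨h5, h6⟩, h7, h8⟩ := h <;>
    have h9 := h8.mem (⟨cl_sub ha hac, h7⟩ : c ∈ R ∩ _)
  · refine BH (h8.mono Set.inter_subset_right) k1 h7 hp1 ?_ ?_ <;> intro v <;> simp only [mem_Rc] <;> omega
  · refine BH (h8.mono Set.inter_subset_right).symm k2 h9.2 hp2 ?_ ?_ <;> intro v <;> simp only [mem_Rc] <;> omega
  · refine BV (h8.mono Set.inter_subset_right) k3 h7 hp3 ?_ ?_ <;> intro v <;> simp only [mem_Rc] <;> omega
  · refine BV (h8.mono Set.inter_subset_right).symm k4 h9.2 hp4 ?_ ?_ <;> intro v <;> simp only [mem_Rc] <;> omega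



noncomputable def an (s : ℤ) : Finset E := (eds (nm_fin (3*s))).filter fun e => s ≤ nm e.1

lemma ev_dep_an {s a b c d : ℤ} (h : ∀ v ∈ Rc a b c d, s ≤ nm v ∧ nm v ≤ 3*s) (A B : Set V) :
    Dep (an s) (ev (Rc a b c d) A B) := by
  refine (ev_dep (Rc_fin _ _ _ _) A B).mono fun e he => ?_
  rw [mem_eds] at he
  rw [an, Finset.mem_filter, mem_eds]
  exact ⟨(h _ he).2, (h _ he).1⟩

lemma XX_dep {s : ℤ} (hs : 2 ≤ s) : Dep (an s) (XX s) := by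
  refine ((ev_dep_an ?_ _ _).inter (ev_dep_an ?_ _ _)).inter ((ev_dep_an ?_ _ _).inter (ev_dep_an ?_ _ _)) <;>
    intro v <;> simp only [mem_Rc, nm] <;> omega

lemma f_mono {f : ℕ → ℤ} (h2 : ∀ i, 2 ≤ f i) (h3 : ∀ i, 3 * f i < f (i + 1)) : Monotone f :=
  monotone_nat_of_le_succ fun i => by have := h2 i; have := h3 i; omega

lemma blk {m : Measure Om} (hm : Bern (1/2) m) {f : ℕ → ℤ} (h2 : ∀ i, 2 ≤ f i) (h3 : ∀ i, 3 * f i < f (i + 1))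
    {c : ℝ} (k : ℕ) (hc : ∀ i < k, c ≤ m.real (XX (f i))) :
    m.real {ω | ∀ i < k, ω ∉ XX (f i)} ≤ (1 - c) ^ k ∧
      Dep ((eds (nm_fin (f k - 1)))) {ω : Om | ∀ i < k, ω ∉ XX (f i)} := by
  have := hm.1
  have dep : ∀ k, Dep ((eds (nm_fin (f k - 1)))) {ω : Om | ∀ i < k, ω ∉ XX (f i)} := by
    intro k ω ω' h hω i hi h'
    refine hω i hi (XX_dep (h2 i) ω' ω (fun e he => (h e ?_).symm) h')
    rw [an, Finset.mem_filter, mem_eds] at he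
    rw [mem_eds]
    have h5 := he.1
    have h4 := f_mono h2 h3 (show i + 1 ≤ k from hi)
    have := h3 i
    simp only [Set.mem_ofPred_eq] at *
    omega
  refine ⟨?_, dep k⟩
  induction k with
  | zero => simp
  | succ k ih =>
    have e : {ω : Om | ∀ i < k + 1, ω ∉ XX (f i)} = {ω : Om | ∀ i < k, ω ∉ XX (f i)} ∩ (XX (f k))ᶜ := by
      ext ω
      simp only [Set.mem_ofPred_eq, Set.mem_inter_iff, Set.mem_compl_iff]
      refine ⟨fun h => ⟨fun i hi => h i (by omega), h k (by omega)⟩, fun h i hi => ?_⟩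
      rcases Nat.lt_succ_iff_lt_or_eq.1 hi with h' | rfl
      · exact h.1 i h'
      · exact h.2
    rw [e, hm.indep (by norm_num) (by norm_num) ?_ (dep k) (XX_dep (h2 k)).compl, pow_succ, probReal_compl_eq_one_sub (XX_dep (h2 k)).meas]
    · have := hc k (by omega)
      have h5 : m.real (XX (f k)) ≤ 1 := measureReal_le_one
      refine mul_le_mul (ih fun i hi => hc i (by omega)) (by linarith) (by linarith) (pow_nonneg (by linarith) _)
    · rw [Finset.disjoint_left]
      intro x hx hx'
      rw [an, Finset.mem_filter, mem_eds] at hx'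
      rw [mem_eds] at hx
      simp only [Set.mem_ofPred_eq] at *
      omega

lemma blk' {m : Measure Om} (hm : Bern (1/2) m) {f : ℕ → ℤ} (h2 : ∀ i, 2 ≤ f i) (h3 : ∀ i, 3 * f i < f (i + 1))
    {c : ℝ} (k : ℕ) (hc : ∀ i < k, c ≤ m.real (XX (f i))) {R A B : Set V} (hA : ∀ v ∈ A, nm v ≤ f 0)
    (hB : ∀ v ∈ B, ∀ i < k, 2 * f i + 1 ≤ nm v) : m.real (ev R A B) ≤ (1 - c) ^ k := by
  have := hm.1
  obtain ⟨h4, h5⟩ := blk hm h2 h3 k hc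
  rw [← du_real hm h5] at h4
  refine le_trans (measureReal_mono ?_) h4
  rintro ω ⟨a, ha, b, hb, h6, h7, h8⟩ i hi hX
  exact XX_block (h2 i) hX ha ((hA a h6).trans (f_mono h2 h3 (Nat.zero_le i))) (hB b h7 i hi) h8

def Good (m : Measure Om) (s : ℤ) : Prop := 2 ≤ s ∧ cb ≤ q m (6*s) s

lemma ex_pow {c : ℝ} (h0 : 0 < c) (h1 : c ≤ 1) {ε : ℝ} (hε : 0 < ε) : ∃ K : ℕ, (1 - c) ^ K < ε :=
  exists_pow_lt_of_lt_one hε (by linarith)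

lemma q_le_one {m : Measure Om} (hm : Bern (1/2) m) (W H : ℤ) : q m W H ≤ 1 := by
  have := hm.1
  exact measureReal_le_one

lemma L4 {m : Measure Om} (hm : Bern (1/2) m) : ∃ K : ℕ, ∀ s, Good m s → ∃ i : ℕ, i + 1 ≤ K ∧ aa m (4^(i+1) * s) s < 1/8 := by
  obtain ⟨K, hK⟩ : ∃ K : ℕ, (1 - cd*cd*(cd*cd)) ^ K < 1/8 := by
    have h0 := cd_pos
    by_cases h1 : cd ≤ 1
    · refine ex_pow (by positivity) ?_ (by norm_num)
      have : cd * cd ≤ 1 := by nlinarith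
      nlinarith
    · exfalso
      apply h1
      have hca : ca ≤ 1 := by unfold ca; norm_num
      have hcb : cb ≤ 1 := by
        have := ca_pos
        unfold cb
        exact mul_le_one₀ hca (by positivity) (pow_le_one₀ (by positivity) (by linarith))
      have hcc : cc ≤ 1 := by
        have := cb_pos
        have : cb * cb ≤ 1 := by nlinarith
        have : cb * cb * (cb * cb) ≤ 1 := by nlinarith
        unfold cc; linarith
      have := cc_pos
      unfold cd
      exact mul_le_one₀ hcc (by positivity) (pow_le_one₀ (by positivity) (by linarith))
  refine ⟨K + 1, fun s ⟨hs, hg⟩ => ?_⟩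
  by_contra hcon
  push Not at hcon
  have p4 : ∀ i : ℕ, (4:ℤ) ≤ 4^(i+1) := fun i => by
    have : (1:ℤ) ≤ 4^i := one_le_pow₀ (by norm_num)
    rw [pow_succ]; omega
  have p5 : ∀ i : ℕ, 4 * s ≤ 4^(i+1) * s := fun i => mul_le_mul_of_nonneg_right (p4 i) (by omega)
  have hc : ∀ i < K, cd*cd*(cd*cd) ≤ m.real (XX (2 * (4^(i+1) * s))) := by
    intro i hi
    have := p5 i
    refine XX_le hm (by omega) cd_pos.le ?_
    have := L3 hm (by omega) (by omega) hg (hcon i (by omega))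
    rwa [show 6 * (2 * (4^(i+1) * s)) = 12 * (4^(i+1) * s) by ring]
  set T := 4^(K+1) * s with hT
  have h := blk' hm (f := fun i => 2 * (4^(i+1) * s)) (fun i => by have := p5 i; omega)
    (fun i => by have := p5 i; rw [pow_succ 4 (i+1)]; linarith) K hc (R := Rc (-(2*T)) 0 (-T) T)
    (A := {v | v.1 = 0 ∧ 0 ≤ v.2 ∧ v.2 ≤ s}) (B := {v | v.1 = -(2*T)}) ?_ ?_
  · have h1 := hcon K le_rfl
    have h2 : aa m T s ≤ m.real (ev (Rc (-(2*T)) 0 (-T) T) {v | v.1 = -(2*T)} {v | v.1 = 0 ∧ 0 ≤ v.2 ∧ v.2 ≤ s}) := by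
      refine (Au.trans (-T) 0).le2 hm ?_
      intro v hv; simp only [mem_Rc, Set.mem_ofPred_eq] at *; omega
    have := hm.1
    have h3 : m.real (ev (Rc (-(2*T)) 0 (-T) T) {v | v.1 = -(2*T)} {v | v.1 = 0 ∧ 0 ≤ v.2 ∧ v.2 ≤ s}) ≤ _ := measureReal_mono ev_symm (measure_ne_top _ _)
    linarith
  · intro v hv
    have := p5 0
    simp only [Set.mem_ofPred_eq, nm] at *; omega
  · intro v hv i hi
    have h1 : (4:ℤ)^(i+1) * 4 ≤ 4^(K+1) := by
      rw [← pow_succ]; exact pow_le_pow_right₀ (by norm_num) (by omega)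
    have h2 := mul_le_mul_of_nonneg_right h1 (by omega : 0 ≤ s)
    have := p5 i
    simp only [Set.mem_ofPred_eq, nm] at *
    rw [← hT] at h2
    have : 4 ^ (i+1) * 4 * s = 4 * (4^(i+1) * s) := by ring
    omega

lemma L5 {m : Measure Om} (hm : Bern (1/2) m) : ∃ C : ℕ, 1 ≤ C ∧ ∀ s, Good m s → ∃ s', Good m s' ∧ 4 * s ≤ s' ∧ s' ≤ C * s := by
  obtain ⟨K, hK⟩ := L4 hm
  refine ⟨5 * (2^(2*K) * 4^K), Nat.one_le_iff_ne_zero.2 (by positivity), fun s hs => ?_⟩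
  obtain ⟨i, hi, h1⟩ := hK s hs
  set t := 4^(i+1) * s with ht
  have hs2 := hs.1
  have t1 : 4 * s ≤ t := by
    refine mul_le_mul_of_nonneg_right ?_ (by omega)
    have : (1:ℤ) ≤ 4^i := one_le_pow₀ (by norm_num)
    rw [pow_succ]; omega
  have t2 : t ≤ 4^K * s := mul_le_mul_of_nonneg_right (pow_le_pow_right₀ (by norm_num) hi) (by omega)
  have pt : ∀ j : ℕ, t ≤ 2^j * t := fun j => by
    have : (1:ℤ) ≤ 2^j := one_le_pow₀ (by norm_num)
    nlinarith
  have ha := (al_spec hm (n := t) (by omega)).2.2.2 s h1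
  obtain ⟨j, hj, h2⟩ : ∃ j < 2*K, al m (2 * (2^j * t)) ≤ 4 * al m (2^j * t) := by
    by_contra hcon
    push Not at hcon
    have key : ∀ j ≤ 2*K, (4:ℤ)^j * s < al m (2^j * t) := by
      intro j
      induction j with
      | zero => intro _; simpa using ha
      | succ j ih =>
        intro hj
        have h3 := ih (by omega)
        have h4 := hcon j (by omega)
        rw [show (2:ℤ)^(j+1) * t = 2 * (2^j * t) by ring, show (4:ℤ)^(j+1) * s = 4 * (4^j * s) by ring]
        omega
    have h3 := key (2*K) le_rfl
    have h4 := (al_spec hm (n := 2^(2*K) * t) (by have := pt (2*K); omega)).2.2.1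
    have h5 : (2:ℤ)^(2*K) * t ≤ 2^(2*K) * (4^K * s) := mul_le_mul_of_nonneg_left t2 (by positivity)
    have h6 : (2:ℤ)^(2*K) * (4^K * s) = 4^(2*K) * s := by
      rw [pow_mul, pow_mul]; norm_num
      rw [← mul_assoc, ← mul_pow]; norm_num
    omega
  have h3 := L2 hm (r := 2^j * t) (by have := pt j; omega) h2
  have := pt j
  refine ⟨5 * (2^j * t), ⟨by omega, by rwa [show 6 * (5 * (2^j * t)) = 30 * (2^j * t) by ring]⟩, by omega, ?_⟩
  push_cast
  have h4 : (2:ℤ)^j ≤ 2^(2*K) := pow_le_pow_right₀ (by norm_num) hj.le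
  have h5 : (2:ℤ)^j * t ≤ 2^(2*K) * (4^K * s) := mul_le_mul h4 t2 (by omega) (by positivity)
  linarith

lemma good0 {m : Measure Om} (hm : Bern (1/2) m) : ∃ s, Good m s ∧ s ≤ 10 := by
  by_cases h : al m (2*1) ≤ 4 * al m 1
  · exact ⟨5, ⟨by norm_num, by simpa using L2 hm (r := 1) le_rfl h⟩, by norm_num⟩
  · have h1 := (al_spec hm (n := 4) (by norm_num)).2.2.1
    exact ⟨10, ⟨by norm_num, by simpa using L2 hm (r := 2) (by norm_num) (by norm_num at *; omega)⟩, by norm_num⟩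

lemma th_exp {m : Measure Om} (hm : Bern (1/2) m) : ∃ C : ℕ, 2 ≤ C ∧ ∀ n k : ℕ, C^k ≤ n →
    th m n ≤ (1 - cb*cb*(cb*cb))^k := by
  obtain ⟨C, hC, step⟩ := L5 hm
  obtain ⟨s0, g0, hs0⟩ := good0 hm
  choose! nx n1 n2 n3 using step
  let g : ℕ → ℤ := fun k => nx^[k] s0
  have gs : ∀ k, g (k+1) = nx (g k) := fun k => Function.iterate_succ_apply' nx k s0
  have gg : ∀ k, Good m (g k) := by
    intro k
    induction k with
    | zero => exact g0
    | succ k ih => rw [gs]; exact n1 _ ih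
  have gb : ∀ k, g k ≤ 10 * C^k := by
    intro k
    induction k with
    | zero => simpa [g] using hs0
    | succ k ih =>
      rw [gs]
      have := n3 _ (gg k)
      have h2 : (C:ℤ) * g k ≤ C * (10 * C^k) := mul_le_mul_of_nonneg_left ih (by omega)
      rw [pow_succ]; linarith
  refine ⟨21 * C, by omega, fun n k hn => ?_⟩
  refine blk' hm (f := g) (fun i => (gg i).1) (fun i => ?_) k (fun i _ => XX_le hm (by have := (gg i).1; omega) cb_pos.le (gg i).2) ?_ ?_
  · have := n2 _ (gg i); have := (gg i).1; rw [gs]; omega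
  · intro v hv
    rw [Set.mem_singleton_iff.1 hv]
    have := (gg 0).1
    simp [nm]; omega
  · intro v hv i hi
    have h1 := gb i
    have h2 : C^i * 21 ≤ n := by
      refine le_trans ?_ hn
      refine le_trans ?_ (Nat.pow_le_pow_right (by omega) (show i + 1 ≤ k from hi))
      rw [pow_succ]
      exact Nat.mul_le_mul (Nat.pow_le_pow_left (by omega) _) (by omega)
    have h3 : (1:ℤ) ≤ C^i := one_le_pow₀ (by exact_mod_cast hC)
    have h4 : (C:ℤ)^i * 21 ≤ n := by exact_mod_cast h2
    simp only [Set.mem_ofPred_eq] at hv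
    rw [hv]; omega

lemma th_lt {m : Measure Om} (hm : Bern (1/2) m) {n : ℕ} (hn : 1 ≤ n) : th m n ≤ 15/16 := by
  have := hm.1
  set s : Finset E := {((0,0),false), ((0,0),true), ((-1,0),false), ((0,-1),true)} with hs
  have h1 := hm.2 s fun _ => false
  have hc : s.card = 4 := by rw [hs]; decide
  have hd : Dep s {ω : Om | ∀ e ∈ s, ω e = false} := by
    intro ω ω' h h' e he; rw [← h e he]; exact h' e he
  have h2 : m.real {ω : Om | ∀ e ∈ s, ω e = false} = 1/16 := by
    rw [measureReal_def, h1, ENNReal.toReal_ofReal]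
    · simp [hc]; norm_num
    · simp [hc]; norm_num
  have h3 := probReal_compl_eq_one_sub (μ := m) hd.meas
  rw [h2] at h3
  refine le_trans (measureReal_mono ?_ (measure_ne_top _ _)) (h3.le.trans (by norm_num))
  rintro ω ⟨a, ha, b, hb, rfl, h5, h6⟩ hω
  rcases Relation.ReflTransGen.cases_head h6 with h | ⟨c, h7, -⟩
  · subst h; simp [nm] at h5; omega
  · obtain ⟨⟨⟨⟨x, y⟩, d⟩, h8, h9⟩, -⟩ := h7
    have : ω ((x, y), d) = false := by
      refine hω _ ?_
      rcases h9 with ⟨h10, h11⟩ | ⟨h10, h11⟩ <;> cases d <;> simp [tgt, Prod.ext_iff] at h10 h11 <;> simp [hs, Prod.ext_iff] <;> omega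
    rw [this] at h8; exact absurd h8 (by decide)

lemma th_pow {m : Measure Om} (hm : Bern (1/2) m) : ∃ α : ℝ, 0 < α ∧ ∀ n : ℕ, 1 ≤ n → th m n ≤ (n:ℝ) ^ (-α) := by
  obtain ⟨C, hC, h⟩ := th_exp hm
  set ρ := max (1 - cb*cb*(cb*cb)) (15/16) with hρ
  have cb0 := cb_pos
  have r1 : ρ < 1 := max_lt (by have : 0 < cb*cb*(cb*cb) := by positivity
                                linarith) (by norm_num)
  have r0 : 0 < ρ := lt_of_lt_of_le (by norm_num) (le_max_right _ _)
  have lr : Real.log ρ < 0 := Real.log_neg r0 r1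
  have hC1 : (1:ℝ) < C := by exact_mod_cast hC
  have lC : 0 < Real.log C := Real.log_pos hC1
  have hcb : 0 ≤ 1 - cb*cb*(cb*cb) := by
    obtain ⟨s0, g0, hs0⟩ := good0 hm
    have := g0.2.trans (q_le_one hm _ _)
    have : cb * cb ≤ 1 := by nlinarith
    nlinarith
  refine ⟨-Real.log ρ / (2 * Real.log C), div_pos (by linarith) (by positivity), fun n hn => ?_⟩
  set k := Nat.log C n
  have k1 : C^k ≤ n := Nat.pow_log_le_self C (by omega)
  have k2 : n < C^(k+1) := Nat.lt_pow_succ_log_self (by omega) n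
  have t1 : th m n ≤ ρ^k := (h n k k1).trans (pow_le_pow_left₀ hcb (le_max_left _ _) k)
  have t2 : th m n ≤ ρ := (th_lt hm hn).trans (le_max_right _ _)
  have t3 : th m n ≤ ρ ^ (((k:ℝ)+1)/2) := by
    rcases Nat.eq_zero_or_pos k with h0 | h0
    · refine t2.trans ?_
      nth_rewrite 1 [← Real.rpow_one ρ]
      refine Real.rpow_le_rpow_of_exponent_ge r0 r1.le ?_
      rw [h0]; norm_num
    · refine t1.trans ?_
      rw [← Real.rpow_natCast]
      refine Real.rpow_le_rpow_of_exponent_ge r0 r1.le ?_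
      have : (1:ℝ) ≤ k := by exact_mod_cast h0
      linarith
  refine t3.trans ?_
  have n0 : (0:ℝ) < n := by exact_mod_cast hn
  rw [Real.rpow_def_of_pos r0, Real.rpow_def_of_pos n0, Real.exp_le_exp]
  have l1 : Real.log n ≤ (k+1) * Real.log C := by
    have : (n:ℝ) ≤ C^(k+1) := by exact_mod_cast k2.le
    have := Real.log_le_log n0 this
    rw [Real.log_pow] at this
    push_cast at this
    exact this
  have e : Real.log n * -(-Real.log ρ / (2 * Real.log C)) = (Real.log n / Real.log C) * (Real.log ρ / 2) := by
    field_simp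
  rw [e]
  have l2 : Real.log n / Real.log C ≤ k + 1 := (div_le_iff₀ lC).2 l1
  nlinarith


def ver (v : V) : Vertex 2 := ![v.1, v.2]

lemma ver_inj {u v : V} (h : ver u = ver v) : u = v := by
  have h0 := congrFun h 0
  have h1 := congrFun h 1
  simp [ver] at h0 h1
  exact Prod.ext h0 h1

lemma ver_surj (x : Vertex 2) : ver (x 0, x 1) = x := by
  funext i
  fin_cases i <;> simp [ver]

lemma adj_ver {u v : V} : adj (ver u) (ver v) ↔ (u.1 - v.1).natAbs + (u.2 - v.2).natAbs = 1 := by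
  simp [adj, ver, Fin.sum_univ_two]

lemma adj_tgt (e : E) : adj (ver e.1) (ver (tgt e)) := by
  obtain ⟨⟨x, y⟩, b⟩ := e
  rw [adj_ver]
  cases b <;> simp [tgt]

def emap (e : E) : Edge 2 := ⟨s(ver e.1, ver (tgt e)), _, _, adj_tgt e, rfl⟩

lemma adj_cases {u v : V} (h : adj (ver u) (ver v)) : ∃ e : E, (u = e.1 ∧ v = tgt e) ∨ (v = e.1 ∧ u = tgt e) := by
  rw [adj_ver] at h
  obtain ⟨x, y⟩ := u
  obtain ⟨x', y'⟩ := v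
  simp only at h
  have : (x' = x + 1 ∧ y' = y) ∨ (x' = x ∧ y' = y + 1) ∨ (x = x' + 1 ∧ y' = y) ∨ (x' = x ∧ y = y' + 1) := by omega
  rcases this with ⟨rfl, rfl⟩ | ⟨rfl, rfl⟩ | ⟨rfl, rfl⟩ | ⟨rfl, rfl⟩
  · exact ⟨((x, y'), false), Or.inl ⟨rfl, by simp [tgt]⟩⟩
  · exact ⟨((x', y), true), Or.inl ⟨rfl, by simp [tgt]⟩⟩
  · exact ⟨((x', y'), false), Or.inr ⟨rfl, by simp [tgt]⟩⟩
  · exact ⟨((x', y'), true), Or.inr ⟨rfl, by simp [tgt]⟩⟩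

lemma emap_bij : Function.Bijective emap := by
  constructor
  · intro e f h
    have h : s(ver e.1, ver (tgt e)) = s(ver f.1, ver (tgt f)) := congrArg Subtype.val h
    rw [Sym2.eq_iff] at h
    obtain ⟨⟨x, y⟩, b⟩ := e
    obtain ⟨⟨x', y'⟩, b'⟩ := f
    rcases h with ⟨h1, h2⟩ | ⟨h1, h2⟩ <;> have h1 := ver_inj h1 <;> have h2 := ver_inj h2 <;>
      cases b <;> cases b' <;> simp [tgt, Prod.ext_iff] at h1 h2 ⊢ <;> omega
  · rintro ⟨_, x, y, h, rfl⟩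
    have h' := h
    rw [← ver_surj x, ← ver_surj y] at h'
    obtain ⟨e, ⟨h1, h2⟩ | ⟨h1, h2⟩⟩ := adj_cases h'
    · refine ⟨e, Subtype.ext ?_⟩
      simp only [emap]
      rw [← h1, ← h2, ver_surj, ver_surj]
    · refine ⟨e, Subtype.ext ?_⟩
      simp only [emap]
      rw [← h1, ← h2, ver_surj, ver_surj, Sym2.eq_swap]

noncomputable def eqv : E ≃ Edge 2 := Equiv.ofBijective emap emap_bij

noncomputable def tr (ω : Config 2) : Om := fun e => ω (eqv e)

lemma step_st {ω : Config 2} {u v : V} : step ω (ver u) (ver v) ↔ st (tr ω) u v := by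
  constructor
  · rintro ⟨h, h1⟩
    obtain ⟨e, he⟩ := adj_cases h
    refine ⟨e, ?_, he⟩
    rw [← h1]
    unfold tr
    congr 1
    refine Subtype.ext ?_
    change s(ver e.1, ver (tgt e)) = s(ver u, ver v)
    rcases he with ⟨rfl, rfl⟩ | ⟨rfl, rfl⟩
    · rfl
    · exact Sym2.eq_swap
  · rintro ⟨e, h1, ⟨rfl, rfl⟩ | ⟨rfl, rfl⟩⟩
    · exact ⟨adj_tgt e, h1⟩
    · have ha : adj (ver (tgt e)) (ver e.1) := by
        have := adj_tgt e; rw [adj_ver] at *; omega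
      refine ⟨ha, ?_⟩
      rw [← h1]
      unfold tr
      congr 1
      refine Subtype.ext ?_
      exact Sym2.eq_swap

lemma conn_cn {ω : Config 2} {u v : V} : Conn ω (ver u) (ver v) ↔ cn (tr ω) Set.univ u v := by
  constructor
  · intro h
    have : ∀ x y, Conn ω x y → cn (tr ω) Set.univ (x 0, x 1) (y 0, y 1) := by
      intro x y h
      induction h with
      | refl => exact .refl
      | @tail b c _ h2 ih =>
        refine .tail ih ⟨?_, trivial, trivial⟩
        rw [← step_st, ver_surj, ver_surj]; exact h2
    simpa [ver] using this _ _ h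
  · intro h
    induction h with
    | refl => exact .refl
    | tail _ h2 ih => exact .tail ih (step_st.2 h2.1)

lemma bd_iff {n : ℕ} {v : V} : ver v ∈ boxBoundary 2 n ↔ nm v = n := by
  have box_iff : ∀ v : V, ver v ∈ box 2 n ↔ nm v ≤ n := by
    intro v
    have : ver v ∈ box 2 n ↔ |v.1| ≤ (n:ℤ) ∧ |v.2| ≤ (n:ℤ) := by
      simp [box, ver, Fin.forall_fin_two]
    rw [this, abs_le, abs_le]; unfold nm; omega
  constructor
  · rintro ⟨h1, y, h2, h3⟩
    rw [← ver_surj y] at h2 h3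
    rw [box_iff] at h1 h3
    rw [adj_ver] at h2
    simp only [nm] at *
    omega
  · intro h
    refine ⟨(box_iff v).2 h.le, ?_⟩
    have key : ∀ w : V, (v.1 - w.1).natAbs + (v.2 - w.2).natAbs = 1 → (n:ℤ) < nm w → ∃ y, adj (ver v) y ∧ y ∉ box 2 n :=
      fun w h1 h2 => ⟨ver w, adj_ver.2 h1, by rw [box_iff]; omega⟩
    have : v.1 = n ∨ -v.1 = n ∨ v.2 = n ∨ -v.2 = n := by unfold nm at h; omega
    rcases this with h | h | h | h
    · exact key (v.1 + 1, v.2) (by simp) (by simp only [nm]; omega)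
    · exact key (v.1 - 1, v.2) (by simp) (by simp only [nm]; omega)
    · exact key (v.1, v.2 + 1) (by simp) (by simp only [nm]; omega)
    · exact key (v.1, v.2 - 1) (by simp) (by simp only [nm]; omega)

lemma ver0 : origin 2 = ver 0 := by
  funext i; fin_cases i <;> simp [origin, ver]

lemma reach {ω : Om} {n : ℕ} {R : Set V} {v : V} (h0 : (0 : V) ∈ R) (h : cn ω R 0 v) (hv : n ≤ nm v) :
    ω ∈ ev {v | nm v ≤ n} {0} {v | nm v = n} := by
  obtain ⟨c, -, h1, h2⟩ := cn.first lipn h0 h (t := n) (by simp [nm]) hv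
  refine ⟨0, by simp [nm], c, h1.le, rfl, h1, h2.mono fun v hv => hv.2⟩

lemma ZB_iff {ω : Config 2} {n : ℕ} : ω ∈ ZeroToBoundary 2 n ↔ tr ω ∈ ev {v | nm v ≤ n} {0} {v | nm v = n} := by
  constructor
  · rintro ⟨y, h1, h2⟩
    rw [← ver_surj y] at h1 h2
    rw [ver0, conn_cn] at h2
    rw [bd_iff] at h1
    exact reach (Set.mem_univ _) h2 h1.ge
  · rintro ⟨a, ha, b, hb, rfl, h1, h2⟩
    refine ⟨ver b, bd_iff.2 h1, ?_⟩
    rw [ver0, conn_cn]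
    exact h2.mono (Set.subset_univ _)

lemma ZI_eq : ZeroToInfinity 2 = ⋂ n : ℕ, ZeroToBoundary 2 n := by
  ext ω
  rw [Set.mem_iInter]
  constructor
  · intro h n
    have hn : ¬ cluster ω (origin 2) ⊆ ver '' {v | nm v ≤ n} := fun hs =>
      h (((nm_fin n).image _).subset hs)
    obtain ⟨y, h1, h2⟩ := Set.not_subset.1 hn
    rw [← ver_surj y] at h1 h2
    change Conn ω _ _ at h1
    rw [ver0, conn_cn] at h1
    refine ZB_iff.2 (reach (Set.mem_univ _) h1 ?_)
    by_contra h3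
    exact h2 ⟨_, (not_le.1 h3).le, rfl⟩
  · intro h hfin
    have hfin : (cluster ω (origin 2)).Finite := hfin
    obtain ⟨M, hM⟩ := (hfin.image fun y : Vertex 2 => (nm (y 0, y 1)).toNat).bddAbove
    obtain ⟨y, h1, h2⟩ := h (M + 1)
    have := hM ⟨y, h2, rfl⟩
    rw [← ver_surj y, bd_iff] at h1
    simp only [h1] at this
    omega

lemma tr_meas : Measurable tr := measurable_pi_lambda _ fun e => measurable_pi_apply _

lemma tr_bern {p : ℝ} {μ : Measure (Config 2)} (h : IsBernoulli 2 p μ) : Bern p (μ.map tr) :=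
  Bern.map (ι := Edge 2) (m := μ) h eqv

lemma ZB_meas (n : ℕ) : MeasurableSet (ZeroToBoundary 2 n) := by
  have : ZeroToBoundary 2 n = tr ⁻¹' ev {v | nm v ≤ n} {0} {v | nm v = n} := Set.ext fun ω => ZB_iff
  rw [this]
  exact tr_meas (ev_dep (nm_fin n) _ _).meas

lemma ZB_th {μ : Measure (Config 2)} [IsProbabilityMeasure μ] (n : ℕ) :
    μ (ZeroToBoundary 2 n) = ENNReal.ofReal (th (μ.map tr) n) := by
  have : ZeroToBoundary 2 n = tr ⁻¹' ev {v | nm v ≤ n} {0} {v | nm v = n} := Set.ext fun ω => ZB_iff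
  have := Measure.isProbabilityMeasure_map (μ := μ) tr_meas.aemeasurable
  rw [th, ofReal_measureReal, Measure.map_apply tr_meas (ev_dep (nm_fin n) _ _).meas]
  congr 1

lemma ZB_anti : Antitone (ZeroToBoundary 2) := by
  intro k n hkn ω h
  rw [ZB_iff] at *
  obtain ⟨a, ha, b, hb, rfl, h1, h2⟩ := h
  refine reach ha h2 ?_
  simp only [Set.mem_ofPred_eq] at h1
  omega


/-- Critical Bernoulli percolation on `ℤ²`: `p_c(ℤ²) = 1/2`, and there exists `α > 0`
with `(1/2)·n⁻¹ ≤ ℙ_{1/2}[0 ↔ ∂Λ_n] ≤ n^{−α}` for all `n ≥ 1`; in particular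
`θ(1/2) = 0`. -/
theorem critical_point_Z2
    (μ : ℝ → Measure (Config 2))
    (hμ : ∀ p ∈ Set.Ioo (0 : ℝ) 1, IsBernoulli 2 p (μ p)) :
    sSup {p : ℝ | p ∈ Set.Ioo (0 : ℝ) 1 ∧ μ p (ZeroToInfinity 2) = 0} = 1 / 2 ∧
    (∃ α : ℝ, 0 < α ∧ ∀ n : ℕ, 1 ≤ n →
      ENNReal.ofReal ((1 / 2) * (n : ℝ)⁻¹) ≤ μ (1 / 2) (ZeroToBoundary 2 n) ∧
      μ (1 / 2) (ZeroToBoundary 2 n) ≤ ENNReal.ofReal ((n : ℝ) ^ (-α))) ∧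
    μ (1 / 2) (ZeroToInfinity 2) = 0 := by

  have half : (1/2 : ℝ) ∈ Set.Ioo (0:ℝ) 1 := by norm_num
  have hB : ∀ p ∈ Set.Ioo (0:ℝ) 1, Bern p ((μ p).map tr) := fun p hp => tr_bern (hμ p hp)
  obtain ⟨α, hα, hth⟩ := th_pow (hB _ half)
  have hP : ∀ p ∈ Set.Ioo (0:ℝ) 1, IsProbabilityMeasure (μ p) := fun p hp => (hμ p hp).1
  have hP2 := hP _ half
  have up : ∀ n : ℕ, 1 ≤ n → μ (1 / 2) (ZeroToBoundary 2 n) ≤ ENNReal.ofReal ((n : ℝ) ^ (-α)) := by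
    intro n hn
    rw [ZB_th]
    exact ENNReal.ofReal_le_ofReal (hth n hn)
  have zero : μ (1 / 2) (ZeroToInfinity 2) = 0 := by
    have h1 : Filter.Tendsto (fun n : ℕ => ENNReal.ofReal ((n : ℝ) ^ (-α))) Filter.atTop (nhds 0) := by
      rw [← ENNReal.ofReal_zero]
      exact ENNReal.tendsto_ofReal ((tendsto_rpow_neg_atTop hα).comp tendsto_natCast_atTop_atTop)
    refine le_antisymm (ge_of_tendsto h1 ?_) zero_le
    filter_upwards [Filter.eventually_ge_atTop 1] with n hn
    refine le_trans (measure_mono ?_) (up n hn)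
    rw [ZI_eq]; exact Set.iInter_subset _ n
  refine ⟨IsGreatest.csSup_eq ⟨⟨half, zero⟩, ?_⟩, ⟨α, hα, fun n hn => ⟨?_, up n hn⟩⟩, zero⟩
  · rintro p ⟨hp, h0⟩
    by_contra hlt
    push Not at hlt
    have := hP p hp
    have h1 : ∀ n : ℕ, ENNReal.ofReal (1 - Real.exp (1/2 - p)) ≤ μ p (ZeroToBoundary 2 n) := by
      intro n
      rw [ZB_th]
      exact ENNReal.ofReal_le_ofReal (D2 hB hlt.le hp.2 n)
    have h2 := tendsto_measure_iInter_atTop (μ := μ p) (fun n => (ZB_meas n).nullMeasurableSet) ZB_anti ⟨0, measure_ne_top _ _⟩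
    rw [← ZI_eq, h0] at h2
    have h3 := ge_of_tendsto' h2 h1
    have h4 : 0 < 1 - Real.exp (1/2 - p) := by
      have : Real.exp (1/2 - p) < 1 := by rw [Real.exp_lt_one_iff]; linarith
      linarith
    exact absurd h3 (not_le.2 (ENNReal.ofReal_pos.2 h4))
  · rw [ZB_th]
    refine ENNReal.ofReal_le_ofReal ?_
    have h1 := th_ge (hB _ half) hn
    have n0 : (0:ℝ) < n := by exact_mod_cast hn
    rw [← div_eq_mul_inv, div_le_iff₀ n0]
    linarith
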